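/- arXiv:math/9804147 — 3 statements merged into one kernel-verified Lean document; each statement's English description precedes it below -/
import Mathlib

section
/- Let Ω ⊂ ℝ² be a bounded open strictly convex C^{2,α} domain and let −H_max < H ≤ H̃ < H_max, with u(·;H) and u(·;H̃) the corresponding solutions of (*). Then u(x;H) ≥ u(x;H̃) for all x ∈ Ω, with equality at some point of Ω only if H = H̃. Moreover the family is odd in H: u(x;−H) = −u(x;H) for all x ∈ Ω and |H| ≤ H_max. -/
/-!
In non-divergence form the mean curvature operator is `a(Du) : D²u` with `a` elliptic and locally
Lipschitz. Suppose `u` and `v` solve (*) with right-hand sides `H ≤ K`, and `v - u` is positive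
somewhere. Its maximum then stays in a fixed compact subset of `Ω` when `u` is replaced by
`u - ε e^ℓ` with `ε` small, and for a steep linear functional `ℓ` this perturbation strictly lowers
the operator on that compact set. At the new maximum the gradients agree and the Hessians are
ordered, which contradicts the strict inequality; hence `v ≤ u`. If `v` touches `u` from below,
the same comparison of Hessians at the contact point gives `K ≤ H`. Oddness follows because `-u`
solves (*) with right-hand side `-H` and solutions are unique.
-/

noncomputable section
open Set
open scoped RealInnerProductSpace

/-- The plane ℝ². -/
abbrev E2 : Type := EuclideanSpace ℝ (Fin 2)

/-- Standard basis vectors of ℝ². -/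
def e2 (i : Fin 2) : E2 := EuclideanSpace.single i 1

/-- The mean curvature operator `M u = div (Du / √(1+|Du|²))`. -/
def mcDiv (u : E2 → ℝ) (x : E2) : ℝ :=
  ∑ i : Fin 2,
    fderiv ℝ (fun y => (Real.sqrt (1 + ‖gradient u y‖ ^ 2))⁻¹ • gradient u y) x (e2 i) i

/-- `u` is a solution of problem (*) on `Ω` with mean curvature `H`:
`u ∈ C²(Ω) ∩ C⁰(closure Ω)`, `div(Du/√(1+|Du|²)) = 2H` in `Ω`, `u = 0` on `∂Ω`. -/
def SolvesStar (Ω : Set E2) (H : ℝ) (u : E2 → ℝ) : Prop :=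
  ContDiffOn ℝ 2 u Ω ∧ ContinuousOn u (closure Ω) ∧
    (∀ x ∈ Ω, mcDiv u x = 2 * H) ∧ (∀ x ∈ frontier Ω, u x = 0)

/-- `u` is a `C²(closure Ω)` solution of problem (*). -/
def SolvesStarC2 (Ω : Set E2) (H : ℝ) (u : E2 → ℝ) : Prop :=
  ContDiffOn ℝ 2 u (closure Ω) ∧ (∀ x ∈ Ω, mcDiv u x = 2 * H) ∧ ∀ x ∈ frontier Ω, u x = 0

/-- `H_max = sup {H ≥ 0 : (*) has a unique solution in C²(closure Ω)}`. -/
def Hmax (Ω : Set E2) : ℝ :=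
  sSup {H : ℝ | 0 ≤ H ∧ (∃ u, SolvesStarC2 Ω H u) ∧
    ∀ u v, SolvesStarC2 Ω H u → SolvesStarC2 Ω H v → EqOn u v (closure Ω)}

/-- The Hessian bilinear form of `u` at `x` evaluated at `(w₁, w₂)`. -/
def hess2 (u : E2 → ℝ) (x : E2) (w₁ w₂ : E2) : ℝ :=
  fderiv ℝ (fun y => fderiv ℝ u y w₂) x w₁

/-- `G_v = v_xx v_yy − v_xy²`, the determinant of the Hessian. -/
def Gdet (v : E2 → ℝ) (x : E2) : ℝ :=
  hess2 v x (e2 0) (e2 0) * hess2 v x (e2 1) (e2 1) - hess2 v x (e2 0) (e2 1) ^ 2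

/-- `L_v = v_y² v_xx − 2 v_x v_y v_xy + v_x² v_yy`. -/
def Lcurv (v : E2 → ℝ) (x : E2) : ℝ :=
  (fderiv ℝ v x (e2 1)) ^ 2 * hess2 v x (e2 0) (e2 0)
    - 2 * fderiv ℝ v x (e2 0) * fderiv ℝ v x (e2 1) * hess2 v x (e2 0) (e2 1)
    + (fderiv ℝ v x (e2 0)) ^ 2 * hess2 v x (e2 1) (e2 1)

/-- `Ω` is a bounded strictly convex domain with `C^{2,α}` boundary: it has a `C²` defining
function `f` with `α`-Hölder second derivative, nonvanishing boundary gradient, and the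
second fundamental form of the boundary (tangential Hessian of `f`) is positive, i.e. the
curvature of `∂Ω` is everywhere positive. -/
def StrictlyConvexDomain (α : ℝ) (Ω : Set E2) : Prop :=
  IsOpen Ω ∧ Bornology.IsBounded Ω ∧ Ω.Nonempty ∧
    ∃ f : E2 → ℝ, ContDiff ℝ 2 f ∧ Ω = {x | f x < 0} ∧ frontier Ω = {x | f x = 0} ∧
      (∃ C : ℝ, ∀ x y : E2,
        ‖iteratedFDeriv ℝ 2 f x - iteratedFDeriv ℝ 2 f y‖ ≤ C * ‖x - y‖ ^ α) ∧
      (∀ x ∈ frontier Ω, gradient f x ≠ 0) ∧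
      (∀ x ∈ frontier Ω, ∀ w : E2, w ≠ 0 → ⟪w, gradient f x⟫ = (0:ℝ) →
        0 < hess2 f x w w)

/-- The unit direction `e_θ = (cos θ, sin θ)`. -/
def dirVec (θ : ℝ) : E2 := Real.cos θ • e2 0 + Real.sin θ • e2 1

open Filter Topology

section SecondDerivative

theorem deriv_deriv_nonpos_of_isLocalMax {g : ℝ → ℝ} {t : ℝ} (hg : ContinuousAt g t)
    (hmax : IsLocalMax g t) : deriv (deriv g) t ≤ 0 := by
  by_contra! hpos
  have hmin : IsLocalMin g t := isLocalMin_of_deriv_deriv_pos hpos hmax.deriv_eq_zero hg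
  have hconst : g =ᶠ[𝓝 t] fun _ ↦ g t := by
    filter_upwards [hmax, hmin] with s hle hge using le_antisymm hle hge
  have hzero : deriv (deriv g) t = 0 := by simp [hconst.deriv.deriv_eq]
  exact hpos.ne' hzero

variable {E : Type*} [NormedAddCommGroup E] [NormedSpace ℝ E] {u v : E → ℝ} {x : E}

theorem differentiableAt_fderiv_of_contDiffAt_two (hu : ContDiffAt ℝ 2 u x) :
    DifferentiableAt ℝ (fderiv ℝ u) x :=
  (hu.fderiv_right (m := 1) (by norm_num)).differentiableAt one_ne_zero

theorem eventually_differentiableAt_of_contDiffAt_two (hu : ContDiffAt ℝ 2 u x) :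
    ∀ᶠ y in 𝓝 x, DifferentiableAt ℝ u y :=
  (hu.eventually (by simp)).mono fun _ hy ↦ hy.differentiableAt two_ne_zero

theorem fderiv_fderiv_sub (hu : ContDiffAt ℝ 2 u x) (hv : ContDiffAt ℝ 2 v x) :
    fderiv ℝ (fderiv ℝ (u - v)) x = fderiv ℝ (fderiv ℝ u) x - fderiv ℝ (fderiv ℝ v) x := by
  have hsub : fderiv ℝ (u - v) =ᶠ[𝓝 x] fderiv ℝ u - fderiv ℝ v := by
    filter_upwards [eventually_differentiableAt_of_contDiffAt_two hu,
      eventually_differentiableAt_of_contDiffAt_two hv] with y hy hy' using fderiv_sub hy hy'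
  rw [hsub.fderiv_eq, fderiv_sub (differentiableAt_fderiv_of_contDiffAt_two hu)
    (differentiableAt_fderiv_of_contDiffAt_two hv)]

theorem fderiv_fderiv_apply_apply_nonpos_of_isLocalMax (hu : ContDiffAt ℝ 2 u x)
    (hmax : IsLocalMax u x) (w : E) : fderiv ℝ (fderiv ℝ u) x w w ≤ 0 := by
  set line : ℝ → E := fun t ↦ x + t • w
  have hline (t : ℝ) : HasDerivAt line w t := by
    simpa [line] using ((hasDerivAt_id t).smul_const w).const_add x
  have hx : line 0 = x := by simp [line]
  have htend : Tendsto line (𝓝 0) (𝓝 x) := hx ▸ (hline 0).continuousAt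
  have hderiv : deriv (u ∘ line) =ᶠ[𝓝 0] fun t ↦ fderiv ℝ u (line t) w := by
    filter_upwards [htend.eventually (eventually_differentiableAt_of_contDiffAt_two hu)] with t ht
    exact (ht.hasFDerivAt.comp_hasDerivAt t (hline t)).deriv
  have hderiv₂ : HasDerivAt (fun t ↦ fderiv ℝ u (line t) w) (fderiv ℝ (fderiv ℝ u) x w w) 0 := by
    have hD := (differentiableAt_fderiv_of_contDiffAt_two hu).hasFDerivAt
    rw [← hx] at hD
    simpa [hx] using (hD.comp_hasDerivAt 0 (hline 0)).clm_apply (hasDerivAt_const 0 w)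
  rw [← hderiv₂.deriv, ← hderiv.deriv_eq]
  refine deriv_deriv_nonpos_of_isLocalMax (hu.continuousAt.comp_of_eq (hline 0).continuousAt hx) ?_
  simpa [IsLocalMax, IsMaxFilter, hx] using htend.eventually hmax

theorem fderiv_const_mul_exp_clm (ℓ : StrongDual ℝ E) (c : ℝ) :
    fderiv ℝ (fun y ↦ c * Real.exp (ℓ y)) = fun y ↦ (c * Real.exp (ℓ y)) • ℓ := by
  ext1 y
  simpa [smul_smul] using (ℓ.hasFDerivAt.exp.const_mul c).fderiv

theorem fderiv_fderiv_const_mul_exp_clm (ℓ : StrongDual ℝ E) (c : ℝ) (x : E) :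
    fderiv ℝ (fderiv ℝ fun y ↦ c * Real.exp (ℓ y)) x
      = (c * Real.exp (ℓ x)) • ℓ.smulRight ℓ := by
  have hexp : HasFDerivAt (fun y ↦ c * Real.exp (ℓ y)) ((c * Real.exp (ℓ x)) • ℓ) x := by
    simpa [smul_smul] using ℓ.hasFDerivAt.exp.const_mul c
  rw [fderiv_const_mul_exp_clm, (hexp.smul_const ℓ).fderiv]
  ext v w
  simp [mul_assoc]

end SecondDerivative

section Quasilinear

-- Needed to find the topology on functionals on bilinear forms.
set_option maxSynthPendingDepth 3

variable {E : Type*} [NormedAddCommGroup E] [NormedSpace ℝ E]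

/-- The quasilinear second-order operator `u ↦ a(Du) : D²u`, whose coefficient at the gradient `p`
is a linear functional `a p` on bilinear forms. -/
def quasilinearOp (a : StrongDual ℝ E → (E →L[ℝ] E →L[ℝ] ℝ) →L[ℝ] ℝ) (u : E → ℝ) (x : E) : ℝ :=
  a (fderiv ℝ u x) (fderiv ℝ (fderiv ℝ u) x)

/-- Pointwise ellipticity of the coefficient of a quasilinear operator: `a p` is nonnegative on
positive semidefinite forms and positive on nonzero rank-one forms `ℓ ⊗ ℓ`. -/
structure IsElliptic (a : StrongDual ℝ E → (E →L[ℝ] E →L[ℝ] ℝ) →L[ℝ] ℝ) : Prop where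
  nonneg : ∀ p B, (∀ v, 0 ≤ B v v) → 0 ≤ a p B
  pos : ∀ p (ℓ : StrongDual ℝ E), ℓ ≠ 0 → 0 < a p (ℓ.smulRight ℓ)

variable {a : StrongDual ℝ E → (E →L[ℝ] E →L[ℝ] ℝ) →L[ℝ] ℝ} {u v : E → ℝ} {x : E}

theorem IsElliptic.quasilinearOp_le_of_isLocalMax_sub (ha : IsElliptic a)
    (hu : ContDiffAt ℝ 2 u x) (hv : ContDiffAt ℝ 2 v x) (hmax : IsLocalMax (u - v) x) :
    quasilinearOp a u x ≤ quasilinearOp a v x := by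
  have hgrad : fderiv ℝ u x = fderiv ℝ v x := by
    rw [← sub_eq_zero, ← fderiv_sub (hu.differentiableAt two_ne_zero)
      (hv.differentiableAt two_ne_zero), hmax.fderiv_eq_zero]
  have hhess (w : E) : 0 ≤ (fderiv ℝ (fderiv ℝ v) x - fderiv ℝ (fderiv ℝ u) x) w w := by
    have hnonpos : fderiv ℝ (fderiv ℝ (u - v)) x w w ≤ 0 :=
      fderiv_fderiv_apply_apply_nonpos_of_isLocalMax (hu.sub hv) hmax w
    rw [fderiv_fderiv_sub hu hv, ← neg_sub] at hnonpos
    simpa using hnonpos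
  rw [quasilinearOp, quasilinearOp, hgrad, ← sub_nonneg, ← map_sub]
  exact ha.nonneg _ _ hhess

theorem IsElliptic.exists_pos_forall_le [FiniteDimensional ℝ E] (ha : IsElliptic a)
    (hcont : Continuous a) {ℓ : StrongDual ℝ E} (hℓ : ℓ ≠ 0) (R : ℝ) :
    ∃ c > 0, ∀ p, ‖p‖ ≤ R → c ≤ a p (ℓ.smulRight ℓ) := by
  obtain ⟨c, hc, hle⟩ := (isCompact_closedBall (0 : StrongDual ℝ E) R).exists_forall_le'
    (f := fun p ↦ a p (ℓ.smulRight ℓ)) (by fun_prop) fun p _ ↦ ha.pos p ℓ hℓ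
  exact ⟨c, hc, fun p hp ↦ hle p (mem_closedBall_zero_iff.2 hp)⟩

-- Scaling `ℓ` by `γ` scales the second-order gain by `γ²` but the first-order loss only by `γ`.
theorem IsElliptic.exists_forall_sub_smul_lt [FiniteDimensional ℝ E] [Nontrivial E]
    (ha : IsElliptic a) (hlip : LocallyLipschitz a) (R : ℝ) :
    ∃ ℓ : StrongDual ℝ E, ∀ p B, ‖p‖ ≤ R → ‖B‖ ≤ R → ∀ δ > 0, δ * ‖ℓ‖ ≤ 1 →
      a (p - δ • ℓ) (B - δ • ℓ.smulRight ℓ) < a p B := by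
  obtain ⟨ℓ₀, hℓ₀⟩ := exists_ne (0 : StrongDual ℝ E)
  obtain ⟨c, hc, hcle⟩ := ha.exists_pos_forall_le hlip.continuous hℓ₀ (R + 1)
  obtain ⟨L, hL⟩ := LocallyLipschitzOn.exists_lipschitzOnWith_of_compact
    (isCompact_closedBall (0 : StrongDual ℝ E) (R + 1)) hlip.locallyLipschitzOn
  obtain ⟨γ, hγ₀, hγ⟩ : ∃ γ > 0, L * ‖ℓ₀‖ * R < γ * c :=
    ((eventually_gt_atTop 0).and
      ((tendsto_id.atTop_mul_const hc).eventually_gt_atTop _)).exists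
  refine ⟨γ • ℓ₀, fun p B hp hB δ hδ hδ₁ ↦ ?_⟩
  set q := p - δ • γ • ℓ₀
  have hqp : ‖q - p‖ = δ * γ * ‖ℓ₀‖ := by
    simp [q, norm_smul, abs_of_pos hδ, abs_of_pos hγ₀, mul_assoc]
  have hq : ‖q‖ ≤ R + 1 := by
    have hstep : ‖q - p‖ ≤ 1 := by
      simpa [hqp, norm_smul, abs_of_pos hγ₀, mul_assoc] using hδ₁
    linarith [norm_le_norm_add_norm_sub p q, norm_sub_rev p q]
  have hgain : c ≤ a q (ℓ₀.smulRight ℓ₀) := hcle q hq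
  have hloss : (a q - a p) B ≤ L * (δ * γ * ‖ℓ₀‖) * R := by
    have hlipqp : ‖a q - a p‖ ≤ L * (δ * γ * ‖ℓ₀‖) := by
      rw [← hqp]
      exact hL.norm_sub_le (by simpa using hq) (by simpa using hp.trans (by simp))
    exact (le_abs_self _).trans ((a q - a p).le_of_opNorm_le_of_le hlipqp hB)
  calc a q (B - δ • (γ • ℓ₀).smulRight (γ • ℓ₀))
      = a p B + (a q - a p) B - δ * γ * (γ * a q (ℓ₀.smulRight ℓ₀)) := by
        have hsq : (γ • ℓ₀).smulRight (γ • ℓ₀) = (γ * γ) • ℓ₀.smulRight ℓ₀ := by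
          ext v w
          simp only [ContinuousLinearMap.smulRight_apply, smul_apply, smul_eq_mul]
          ring
        simp only [hsq, map_sub, map_smul, smul_eq_mul, sub_apply, add_sub_cancel, sub_right_inj]
        ring
    _ ≤ a p B + L * (δ * γ * ‖ℓ₀‖) * R - δ * γ * (γ * c) := by gcongr
    _ = a p B - δ * γ * (γ * c - L * ‖ℓ₀‖ * R) := by ring
    _ < a p B := sub_lt_self _ (by have := sub_pos.2 hγ; positivity)

theorem eventually_nhdsGT_zero_mul_lt (C : ℝ) {η : ℝ} (hη : 0 < η) :
    ∀ᶠ ε in 𝓝[>] (0 : ℝ), ε * C < η := by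
  have htend : Tendsto (fun ε : ℝ ↦ ε * C) (𝓝 0) (𝓝 0) := by
    simpa only [id, zero_mul] using (tendsto_id (x := 𝓝 (0 : ℝ))).mul_const C
  exact (htend.eventually_lt_const hη).filter_mono nhdsWithin_le_nhds

theorem IsElliptic.exists_quasilinearOp_sub_smul_lt [FiniteDimensional ℝ E] [Nontrivial E]
    (ha : IsElliptic a) (hlip : LocallyLipschitz a) {K : Set E} (hK : IsCompact K)
    (hu : ∀ x ∈ K, ContDiffAt ℝ 2 u x) :
    ∃ φ : E → ℝ, ContDiff ℝ 2 φ ∧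
      ∀ᶠ ε in 𝓝[>] (0 : ℝ), ∀ x ∈ K, quasilinearOp a (u - ε • φ) x < quasilinearOp a u x := by
  have hD : ContinuousOn (fderiv ℝ u) K := fun x hx ↦
    (differentiableAt_fderiv_of_contDiffAt_two (hu x hx)).continuousAt.continuousWithinAt
  have hD₂ : ContinuousOn (fderiv ℝ (fderiv ℝ u)) K := fun x hx ↦
    (((hu x hx).fderiv_right (m := 1) (by norm_num)).fderiv_right
      (m := 0) (by norm_num)).continuousAt.continuousWithinAt
  obtain ⟨R₁, hR₁⟩ := hK.exists_bound_of_continuousOn hD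
  obtain ⟨R₂, hR₂⟩ := hK.exists_bound_of_continuousOn hD₂
  obtain ⟨ℓ, hℓ⟩ := ha.exists_forall_sub_smul_lt hlip (max R₁ R₂)
  obtain ⟨C, hC⟩ := hK.exists_bound_of_continuousOn (f := fun x ↦ Real.exp (ℓ x)) (by fun_prop)
  refine ⟨fun x ↦ Real.exp (ℓ x), by fun_prop, ?_⟩
  filter_upwards [eventually_nhdsGT_zero_mul_lt (C * ‖ℓ‖) one_pos, self_mem_nhdsWithin]
    with ε hε (hε₀ : 0 < ε) x hx
  have hδ : ε * Real.exp (ℓ x) * ‖ℓ‖ ≤ 1 :=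
    calc ε * Real.exp (ℓ x) * ‖ℓ‖ ≤ ε * C * ‖ℓ‖ := by
          gcongr
          exact (le_abs_self _).trans (hC x hx)
      _ = ε * (C * ‖ℓ‖) := mul_assoc _ _ _
      _ ≤ 1 := hε.le
  have hφ : ContDiffAt ℝ 2 (fun y ↦ ε * Real.exp (ℓ y)) x := by fun_prop
  change quasilinearOp a (u - fun y ↦ ε * Real.exp (ℓ y)) x < quasilinearOp a u x
  rw [quasilinearOp, fderiv_sub ((hu x hx).differentiableAt two_ne_zero)
    (hφ.differentiableAt two_ne_zero), fderiv_fderiv_sub (hu x hx) hφ,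
    fderiv_fderiv_const_mul_exp_clm, fderiv_const_mul_exp_clm]
  exact hℓ _ _ ((hR₁ x hx).trans (le_max_left _ _)) ((hR₂ x hx).trans (le_max_right _ _)) _
    (by positivity) hδ

-- `K` is fixed before `φ`: gradients are bounded on `K` but not near the boundary, so the
-- perturbation has to be adapted to `K`.
theorem exists_isCompact_subset_eventually_exists_isLocalMax_add {X : Type*} [TopologicalSpace X]
    {Ω : Set X} (hΩ : IsOpen Ω) (hcl : IsCompact (closure Ω)) {w : X → ℝ}
    (hw : ContinuousOn w (closure Ω)) (hbd : ∀ x ∈ frontier Ω, w x ≤ 0)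
    {z : X} (hz : z ∈ Ω) (hwz : 0 < w z) :
    ∃ K ⊆ Ω, IsCompact K ∧ ∀ φ : X → ℝ, ContinuousOn φ (closure Ω) →
      ∀ᶠ ε in 𝓝[>] (0 : ℝ), ∃ x ∈ K, IsLocalMax (w + ε • φ) x := by
  have hint (x) (hx : x ∈ closure Ω) (hwx : 0 < w x) : x ∈ Ω := by
    by_contra hxΩ
    exact hwx.not_ge (hbd x (hΩ.frontier_eq ▸ ⟨hx, hxΩ⟩))
  have hhalf : 0 < w z / 2 := half_pos hwz
  refine ⟨closure Ω ∩ w ⁻¹' Ici (w z / 2), fun x ⟨hx, hwx⟩ ↦ hint x hx (hhalf.trans_le hwx),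
    hcl.of_isClosed_subset (hw.preimage_isClosed_of_isClosed isClosed_closure isClosed_Ici)
      inter_subset_left, fun φ hφ ↦ ?_⟩
  obtain ⟨C, hC⟩ := hcl.exists_bound_of_continuousOn hφ
  filter_upwards [eventually_nhdsGT_zero_mul_lt C (half_pos hhalf), self_mem_nhdsWithin]
    with ε hε (hε₀ : 0 < ε)
  have hεφ (y) (hy : y ∈ closure Ω) : |ε * φ y| < w z / 2 / 2 := by
    rw [abs_mul, abs_of_pos hε₀]
    exact (mul_le_mul_of_nonneg_left (hC y hy) hε₀.le).trans_lt hε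
  obtain ⟨x, hx, hmax⟩ := hcl.exists_isMaxOn ⟨z, subset_closure hz⟩ (hw.add (hφ.const_smul ε))
  have hwx : w z / 2 ≤ w x := by
    have hzx : w z + ε * φ z ≤ w x + ε * φ x := hmax (subset_closure hz)
    linarith [abs_lt.1 (hεφ x hx), abs_lt.1 (hεφ z (subset_closure hz))]
  have hxΩ : x ∈ Ω := hint x hx (hhalf.trans_le hwx)
  exact ⟨x, ⟨hx, hwx⟩, hmax.isLocalMax (mem_of_superset (hΩ.mem_nhds hxΩ) subset_closure)⟩

theorem IsElliptic.le_of_quasilinearOp_le [FiniteDimensional ℝ E] [Nontrivial E]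
    (ha : IsElliptic a) (hlip : LocallyLipschitz a) {Ω : Set E} (hΩ : IsOpen Ω)
    (hbdd : Bornology.IsBounded Ω) (hu : ContDiffOn ℝ 2 u Ω) (huc : ContinuousOn u (closure Ω))
    (hv : ContDiffOn ℝ 2 v Ω) (hvc : ContinuousOn v (closure Ω))
    (hle : ∀ x ∈ Ω, quasilinearOp a u x ≤ quasilinearOp a v x)
    (hbd : ∀ x ∈ frontier Ω, v x ≤ u x) {x : E} (hx : x ∈ Ω) : v x ≤ u x := by
  by_contra! hlt
  obtain ⟨K, hKΩ, hK, hmax⟩ := exists_isCompact_subset_eventually_exists_isLocalMax_add hΩ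
    hbdd.isCompact_closure (hvc.sub huc) (fun y hy ↦ sub_nonpos.2 (hbd y hy)) hx (sub_pos.2 hlt)
  have hcu (y) (hy : y ∈ Ω) : ContDiffAt ℝ 2 u y := hu.contDiffAt (hΩ.mem_nhds hy)
  obtain ⟨φ, hφ, hstrict⟩ :=
    ha.exists_quasilinearOp_sub_smul_lt hlip hK fun y hy ↦ hcu y (hKΩ hy)
  obtain ⟨ε, hεstrict, y, hyK, hymax⟩ := (hstrict.and (hmax φ hφ.continuous.continuousOn)).exists
  have hyΩ := hKΩ hyK
  have htouch : quasilinearOp a v y ≤ quasilinearOp a (u - ε • φ) y :=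
    ha.quasilinearOp_le_of_isLocalMax_sub (hv.contDiffAt (hΩ.mem_nhds hyΩ))
      ((hcu y hyΩ).sub (hφ.contDiffAt.const_smul ε))
      (by rwa [sub_sub_eq_add_sub, add_sub_right_comm])
  exact (htouch.trans_lt (hεstrict y hyK)).not_ge (hle y hyΩ)

end Quasilinear

section MeanCurvature

set_option maxSynthPendingDepth 3

variable {E : Type*} [NormedAddCommGroup E] [InnerProductSpace ℝ E]

theorem fderiv_inv_sqrt_one_add_norm_sq_smul {F : Type*} [NormedAddCommGroup F] [NormedSpace ℝ F]
    {g : F → E} {x : F} (hg : DifferentiableAt ℝ g x) (v : F) :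
    fderiv ℝ (fun y ↦ (√(1 + ‖g y‖ ^ 2))⁻¹ • g y) x v =
      (√(1 + ‖g x‖ ^ 2))⁻¹ • fderiv ℝ g x v
        - ((√(1 + ‖g x‖ ^ 2) ^ 3)⁻¹ * ⟪g x, fderiv ℝ g x v⟫) • g x := by
  have hpos : 0 < 1 + ‖g x‖ ^ 2 := by positivity
  have hsqrt := (hg.hasFDerivAt.norm_sq.const_add 1).sqrt hpos.ne'
  have hinv := (hasDerivAt_inv (Real.sqrt_pos.2 hpos).ne').comp_hasFDerivAt x hsqrt
  have hsmul := (hinv.smul hg.hasFDerivAt).fderiv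
  simp only [Function.comp_def] at hsmul
  change fderiv ℝ ((fun y ↦ (√(1 + ‖g y‖ ^ 2))⁻¹) • g) x v = _
  have hcoeff (W I : ℝ) : (W ^ 2)⁻¹ * (W⁻¹ * 2⁻¹ * (2 * I)) = (W ^ 3)⁻¹ * I := by field_simp
  rw [hsmul, sub_eq_add_neg, ← neg_smul, ← hcoeff]
  simp

section Gradient

variable [CompleteSpace E] {u : E → ℝ} {x : E}

theorem norm_gradient (u : E → ℝ) (x : E) : ‖gradient u x‖ = ‖fderiv ℝ u x‖ :=
  (InnerProductSpace.toDual ℝ E).symm.norm_map _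

theorem differentiableAt_gradient_of_contDiffAt_two (hu : ContDiffAt ℝ 2 u x) :
    DifferentiableAt ℝ (gradient u) x :=
  (InnerProductSpace.toDual ℝ E).symm.toContinuousLinearEquiv.differentiableAt.comp x
    (differentiableAt_fderiv_of_contDiffAt_two hu)

theorem inner_fderiv_gradient (hu : ContDiffAt ℝ 2 u x) (v w : E) :
    ⟪fderiv ℝ (gradient u) x v, w⟫ = fderiv ℝ (fderiv ℝ u) x v w := by
  have hgrad := (differentiableAt_gradient_of_contDiffAt_two hu).hasFDerivAt.inner ℝ
    (hasFDerivAt_const w x)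
  have hfun : (fun y ↦ ⟪gradient u y, w⟫) = fun y ↦ fderiv ℝ u y w := by simp
  have hhess := (differentiableAt_fderiv_of_contDiffAt_two hu).hasFDerivAt.clm_apply
    (hasFDerivAt_const w x)
  rw [hfun] at hgrad
  simpa using congrArg (fun L : E →L[ℝ] ℝ ↦ L v) (hgrad.unique hhess)

end Gradient

variable {ι : Type*} [Fintype ι]

-- Lagrange's identity; it is the usual one when `B v w = ℓ v * ℓ w`.
theorem sum_sum_apply_smul_sub_smul {V : Type*} [AddCommGroup V] [Module ℝ V]
    (B : V →ₗ[ℝ] V →ₗ[ℝ] ℝ) (c : ι → ℝ) (b : ι → V) :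
    ∑ i, ∑ j, B (c i • b j - c j • b i) (c i • b j - c j • b i) =
      2 * ∑ i, ((∑ j, c j ^ 2) * B (b i) (b i) - ∑ j, c i * c j * B (b i) (b j)) := by
  have hexpand (i j) : B (c i • b j - c j • b i) (c i • b j - c j • b i) =
      (c j ^ 2 * B (b i) (b i) - c i * c j * B (b i) (b j)) +
        (c i ^ 2 * B (b j) (b j) - c j * c i * B (b j) (b i)) := by
    simp only [map_sub, map_smul, LinearMap.sub_apply, LinearMap.smul_apply, smul_eq_mul]
    ring
  simp only [hexpand, Finset.sum_add_distrib]
  rw [Finset.sum_comm (f := fun i j ↦ c i ^ 2 * B (b j) (b j) - c j * c i * B (b j) (b i)),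
    ← two_mul]
  simp only [Finset.sum_sub_distrib, Finset.sum_mul]

/-- The area element `√(1 + |Du|²)` of a graph with gradient `p = Du`. -/
def areaElement (p : StrongDual ℝ E) : ℝ :=
  √(1 + ‖p‖ ^ 2)

theorem areaElement_pos (p : StrongDual ℝ E) : 0 < areaElement p :=
  Real.sqrt_pos.2 (by positivity)

theorem areaElement_sq (p : StrongDual ℝ E) : areaElement p ^ 2 = 1 + ‖p‖ ^ 2 :=
  Real.sq_sqrt (by positivity)

/-- The coefficient `W⁻³ ∑ (W² δᵢⱼ - pᵢ pⱼ) ∂ᵢⱼ`, `W = √(1 + |p|²)`, of the mean curvature operator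
in non-divergence form, in coordinates with respect to the orthonormal basis `b`. -/
def meanCurvatureCoeff (b : OrthonormalBasis ι ℝ E) (p : StrongDual ℝ E) :
    (E →L[ℝ] E →L[ℝ] ℝ) →L[ℝ] ℝ :=
  (areaElement p ^ 3)⁻¹ • ∑ i, (areaElement p ^ 2 • evalForm (b i) (b i)
    - ∑ j, (p (b i) * p (b j)) • evalForm (b i) (b j))
where
  /-- Evaluation `B ↦ B v w` of bilinear forms; `evalForm (b i) (b j)` stands for `∂ᵢⱼ`. -/
  evalForm (v w : E) : (E →L[ℝ] E →L[ℝ] ℝ) →L[ℝ] ℝ :=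
    (ContinuousLinearMap.apply ℝ ℝ w).comp (ContinuousLinearMap.apply ℝ (E →L[ℝ] ℝ) v)

variable (b : OrthonormalBasis ι ℝ E)

theorem meanCurvatureCoeff_apply (p : StrongDual ℝ E) (B : E →L[ℝ] E →L[ℝ] ℝ) :
    meanCurvatureCoeff b p B = (areaElement p ^ 3)⁻¹ *
      ∑ i, (areaElement p ^ 2 * B (b i) (b i) - ∑ j, p (b i) * p (b j) * B (b i) (b j)) := by
  simp [meanCurvatureCoeff, meanCurvatureCoeff.evalForm]

theorem contDiff_areaElement [CompleteSpace E] {n : WithTop ℕ∞} :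
    ContDiff ℝ n (areaElement : StrongDual ℝ E → ℝ) := by
  have hriesz : ContDiff ℝ n fun p : StrongDual ℝ E ↦ ‖(InnerProductSpace.toDual ℝ E).symm p‖ ^ 2 :=
    (InnerProductSpace.toDual ℝ E).symm.contDiff.norm_sq ℝ
  simp only [LinearIsometryEquiv.norm_map] at hriesz
  exact (contDiff_const.add hriesz).sqrt fun p ↦ by positivity

theorem locallyLipschitz_meanCurvatureCoeff : LocallyLipschitz (meanCurvatureCoeff b) := by
  have : FiniteDimensional ℝ E := b.toBasis.finiteDimensional_of_finite
  have : CompleteSpace E := FiniteDimensional.complete ℝ E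
  have harea := contDiff_areaElement (E := E) (n := 1)
  have hinv : ContDiff ℝ 1 fun p : StrongDual ℝ E ↦ (areaElement p ^ 3)⁻¹ :=
    (harea.pow 3).inv fun p ↦ (pow_pos (areaElement_pos p) 3).ne'
  refine ContDiff.locallyLipschitz (𝕂 := ℝ) ?_
  unfold meanCurvatureCoeff
  fun_prop

theorem le_meanCurvatureCoeff_apply {B : E →L[ℝ] E →L[ℝ] ℝ} (hB : ∀ v, 0 ≤ B v v)
    (p : StrongDual ℝ E) :
    (areaElement p ^ 3)⁻¹ * ∑ i, B (b i) (b i) ≤ meanCurvatureCoeff b p B := by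
  have hnonneg : 0 ≤ ∑ i, (‖p‖ ^ 2 * B (b i) (b i) - ∑ j, p (b i) * p (b j) * B (b i) (b j)) := by
    have hlagrange := sum_sum_apply_smul_sub_smul B.toLinearMap₁₂ (fun i ↦ p (b i)) b
    simp only [ContinuousLinearMap.toLinearMap₁₂_apply_apply_apply, ← b.norm_dual] at hlagrange
    have hsum := Finset.sum_nonneg fun i (_ : i ∈ Finset.univ) ↦
      Finset.sum_nonneg fun j (_ : j ∈ Finset.univ) ↦ hB (p (b i) • b j - p (b j) • b i)
    linarith
  have hsplit : ∑ i, (areaElement p ^ 2 * B (b i) (b i) - ∑ j, p (b i) * p (b j) * B (b i) (b j)) =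
      ∑ i, B (b i) (b i) +
        ∑ i, (‖p‖ ^ 2 * B (b i) (b i) - ∑ j, p (b i) * p (b j) * B (b i) (b j)) := by
    simp only [areaElement_sq, add_mul, one_mul, add_sub_assoc, Finset.sum_add_distrib]
  have harea := areaElement_pos p
  rw [meanCurvatureCoeff_apply, hsplit]
  gcongr
  exact le_add_of_nonneg_right hnonneg

theorem isElliptic_meanCurvatureCoeff : IsElliptic (meanCurvatureCoeff b) where
  nonneg p B hB := by
    have harea := areaElement_pos p
    exact le_trans (mul_nonneg (by positivity) (Finset.sum_nonneg fun i _ ↦ hB _))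
      (le_meanCurvatureCoeff_apply b hB p)
  pos p ℓ hℓ := by
    have harea := areaElement_pos p
    have hnorm : 0 < ∑ i, ℓ (b i) * ℓ (b i) := by
      simp only [← sq, ← b.norm_dual]
      positivity
    have hcube : 0 < (areaElement p ^ 3)⁻¹ := by positivity
    exact (mul_pos hcube hnorm).trans_le
      (le_meanCurvatureCoeff_apply b (B := ℓ.smulRight ℓ) (fun v ↦ mul_self_nonneg (ℓ v)) p)

theorem sum_inner_fderiv_normalized_gradient [CompleteSpace E] {u : E → ℝ} {x : E}
    (hu : ContDiffAt ℝ 2 u x) :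
    ∑ i, ⟪fderiv ℝ (fun y ↦ (√(1 + ‖gradient u y‖ ^ 2))⁻¹ • gradient u y) x (b i), b i⟫ =
      quasilinearOp (meanCurvatureCoeff b) u x := by
  have hhess (v : E) : ⟪gradient u x, fderiv ℝ (gradient u) x v⟫ =
      ∑ j, fderiv ℝ u x (b j) * fderiv ℝ (fderiv ℝ u) x v (b j) := by
    rw [← b.sum_inner_mul_inner]
    simp only [inner_gradient_left, real_inner_comm (fderiv ℝ (gradient u) x v),
      inner_fderiv_gradient hu]
  have harea := (areaElement_pos (fderiv ℝ u x)).ne'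
  rw [quasilinearOp, meanCurvatureCoeff_apply, Finset.mul_sum]
  refine Finset.sum_congr rfl fun i _ ↦ ?_
  rw [fderiv_inv_sqrt_one_add_norm_sq_smul (differentiableAt_gradient_of_contDiffAt_two hu),
    inner_sub_left, real_inner_smul_left, real_inner_smul_left, inner_fderiv_gradient hu, hhess,
    norm_gradient, ← areaElement, inner_gradient_left]
  simp only [mul_assoc, ← Finset.mul_sum]
  field_simp

end MeanCurvature

section DirichletProblem

variable {Ω : Set E2} {H K : ℝ} {u v : E2 → ℝ} {x : E2}

theorem mcDiv_eq_quasilinearOp (hu : ContDiffAt ℝ 2 u x) :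
    mcDiv u x =
      quasilinearOp (meanCurvatureCoeff (EuclideanSpace.basisFun (Fin 2) ℝ)) u x := by
  rw [← sum_inner_fderiv_normalized_gradient _ hu, mcDiv]
  simp [e2, EuclideanSpace.inner_single_right]

theorem mcDiv_neg (u : E2 → ℝ) (x : E2) : mcDiv (-u) x = -mcDiv u x := by
  have hgrad (y) : gradient (-u) y = -gradient u y := by simp [gradient, fderiv_neg]
  simp [mcDiv, hgrad, fderiv_fun_neg]

theorem SolvesStar.contDiffAt (hu : SolvesStar Ω H u) (hΩ : IsOpen Ω) (hx : x ∈ Ω) :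
    ContDiffAt ℝ 2 u x :=
  hu.1.contDiffAt (hΩ.mem_nhds hx)

theorem SolvesStar.quasilinearOp_eq (hu : SolvesStar Ω H u) (hΩ : IsOpen Ω) (hx : x ∈ Ω) :
    quasilinearOp (meanCurvatureCoeff (EuclideanSpace.basisFun (Fin 2) ℝ)) u x = 2 * H := by
  rw [← mcDiv_eq_quasilinearOp (hu.contDiffAt hΩ hx), hu.2.2.1 x hx]

theorem SolvesStar.neg (hu : SolvesStar Ω H u) : SolvesStar Ω (-H) (-u) := by
  obtain ⟨hC2, hC0, hmc, hbd⟩ := hu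
  refine ⟨hC2.neg, hC0.neg, fun x hx ↦ ?_, fun x hx ↦ ?_⟩
  · rw [mcDiv_neg, hmc x hx, mul_neg]
  · rw [Pi.neg_apply, hbd x hx, neg_zero]

theorem SolvesStar.le_of_le (hu : SolvesStar Ω H u) (hv : SolvesStar Ω K v) (hΩ : IsOpen Ω)
    (hbdd : Bornology.IsBounded Ω) (hHK : H ≤ K) (hx : x ∈ Ω) : v x ≤ u x := by
  refine (isElliptic_meanCurvatureCoeff _).le_of_quasilinearOp_le
    (locallyLipschitz_meanCurvatureCoeff (EuclideanSpace.basisFun (Fin 2) ℝ)) hΩ hbdd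
    hu.1 hu.2.1 hv.1 hv.2.1 (fun y hy ↦ ?_) (fun y hy ↦ ?_) hx
  · rw [hu.quasilinearOp_eq hΩ hy, hv.quasilinearOp_eq hΩ hy]
    gcongr
  · rw [hu.2.2.2 y hy, hv.2.2.2 y hy]

theorem SolvesStar.unique (hu : SolvesStar Ω H u) (hv : SolvesStar Ω H v) (hΩ : IsOpen Ω)
    (hbdd : Bornology.IsBounded Ω) (hx : x ∈ Ω) : u x = v x :=
  le_antisymm (hv.le_of_le hu hΩ hbdd le_rfl hx) (hu.le_of_le hv hΩ hbdd le_rfl hx)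

theorem SolvesStar.le_of_isLocalMax_sub (hu : SolvesStar Ω H u) (hv : SolvesStar Ω K v)
    (hΩ : IsOpen Ω) (hx : x ∈ Ω) (hmax : IsLocalMax (u - v) x) : H ≤ K := by
  have htouch := (isElliptic_meanCurvatureCoeff
    (EuclideanSpace.basisFun (Fin 2) ℝ)).quasilinearOp_le_of_isLocalMax_sub
    (hu.contDiffAt hΩ hx) (hv.contDiffAt hΩ hx) hmax
  rw [hu.quasilinearOp_eq hΩ hx, hv.quasilinearOp_eq hΩ hx] at htouch
  linarith

end DirichletProblem

theorem monotonicity_and_symmetry_general {Ω : Set E2} (hΩ : IsOpen Ω)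
    (hbdd : Bornology.IsBounded Ω) {H H' : ℝ} (hle : H ≤ H') {u u' : E2 → ℝ}
    (hu : SolvesStar Ω H u) (hu' : SolvesStar Ω H' u') :
    (∀ x ∈ Ω, u' x ≤ u x) ∧
    ((∃ x ∈ Ω, u x = u' x) → H = H') ∧
    (∀ K : ℝ, ∀ w w' : E2 → ℝ,
      SolvesStar Ω K w → SolvesStar Ω (-K) w' → ∀ x ∈ Ω, w' x = - w x) := by
  have hmono (x) (hx : x ∈ Ω) : u' x ≤ u x := hu.le_of_le hu' hΩ hbdd hle hx
  refine ⟨hmono, fun ⟨x, hx, heq⟩ ↦ le_antisymm hle ?_, fun K w w' hw hw' x hx ↦ ?_⟩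
  · have hmax : IsLocalMax (u' - u) x := by
      filter_upwards [hΩ.mem_nhds hx] with y hy
      simpa only [Pi.sub_apply, heq, sub_self, sub_nonpos] using hmono y hy
    exact hu'.le_of_isLocalMax_sub hu hΩ hx hmax
  · exact hw'.unique hw.neg hΩ hbdd hx

/-- **Monotonicity and symmetry, Corollary 1.**  If
`−H_max < H ≤ H' < H_max`, the corresponding solutions of (*) satisfy `u(x;H) ≥ u(x;H')`
on `Ω`, with equality somewhere in `Ω` only when `H = H'`; moreover the family of solutions
is odd in `H`: `u(x;−K) = −u(x;K)` whenever `|K| ≤ H_max`. -/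
theorem monotonicity_and_symmetry (α : ℝ) (hα : 0 < α) (hα1 : α ≤ 1)
    (Ω : Set E2) (hΩ : StrictlyConvexDomain α Ω)
    (H H' : ℝ) (hlow : -(Hmax Ω) < H) (hle : H ≤ H') (hup : H' < Hmax Ω)
    (u u' : E2 → ℝ) (hu : SolvesStar Ω H u) (hu' : SolvesStar Ω H' u') :
    (∀ x ∈ Ω, u' x ≤ u x) ∧
    ((∃ x ∈ Ω, u x = u' x) → H = H') ∧
    (∀ K : ℝ, |K| ≤ Hmax Ω → ∀ w w' : E2 → ℝ,
      SolvesStar Ω K w → SolvesStar Ω (-K) w' → ∀ x ∈ Ω, w' x = - w x) := by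
  obtain ⟨hmono, heq, hodd⟩ := monotonicity_and_symmetry_general hΩ.1 hΩ.2.1 hle hu hu'
  exact ⟨hmono, heq, fun K _ ↦ hodd K⟩
end
end

section
/- Let Ω ⊂ ℝ² be a bounded strictly convex domain (curvature of ∂Ω everywhere positive) and let u ∈ C²(closure Ω) be any positive function on Ω with u = 0 on ∂Ω and |Du| > 0 on ∂Ω, such that for every direction e_θ = (cos θ, sin θ): (i) N_θ = {x ∈ closure Ω : Du(x)·e_θ = 0} is a smooth embedded curve in closure Ω, and (ii) M_θ = {x ∈ N_θ : D(Du·e_θ)(x) = 0} is empty. Then u has exactly one critical point in Ω. -/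
/-!
An interior maximum of `u` is a critical point. At a critical point `p` the Hessian of `u` is
nondegenerate, so the gradient of `u`, read as a complex number, is a chart near `p`. In this chart
the nodal set of a direction `w` in the unit circle, which is an arc, becomes a line through `0` and
splits into the half-branches of `w` and `-w`. Suppose that `q` is another critical point. All nodal
sets pass through `p` and `q`, and the sub-arc from `p` to `q` departs from `p` along exactly one of
the two half-branches. Which one it is cannot jump when `w` varies, because a nodal set stays close
to the nearby ones. Hence the set of all `w` with departure along the half-branch of `w` is open and
closed in the circle. But `w` and `-w` have the same nodal set, so this set contains exactly one of
them, contradicting the connectedness of the circle.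
-/

noncomputable section
open Set
open scoped RealInnerProductSpace

/-- `Ω` is a bounded strictly convex domain with `C²` boundary of everywhere positive
curvature (no Hölder condition). -/
def C2StrictlyConvexDomain (Ω : Set E2) : Prop :=
  IsOpen Ω ∧ Bornology.IsBounded Ω ∧ Ω.Nonempty ∧
    ∃ f : E2 → ℝ, ContDiff ℝ 2 f ∧ Ω = {x | f x < 0} ∧ frontier Ω = {x | f x = 0} ∧
      (∀ x ∈ frontier Ω, gradient f x ≠ 0) ∧
      (∀ x ∈ frontier Ω, ∀ w : E2, w ≠ 0 → ⟪w, gradient f x⟫ = (0:ℝ) →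
        0 < hess2 f x w w)

open Topology Filter Module

section Arc

variable {X : Type*} [TopologicalSpace X] {N C U : Set X} {p q x y : X}

/-- Being a topological arc: the image of the unit interval under a continuous injection. -/
def IsArc (N : Set X) : Prop :=
  ∃ γ : unitInterval → X, Continuous γ ∧ Function.Injective γ ∧ range γ = N

/-- The sub-arc of an arc `N` with end points `p` and `q`. It is encoded without a
parametrization, as the intersection of all connected subsets of `N` containing `p` and `q`. -/
def subarc (N : Set X) (p q : X) : Set X :=
  ⋂₀ {C | IsPreconnected C ∧ C ⊆ N ∧ p ∈ C ∧ q ∈ C}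

lemma left_mem_subarc : p ∈ subarc N p q := fun _ hC => hC.2.2.1

lemma right_mem_subarc : q ∈ subarc N p q := fun _ hC => hC.2.2.2

lemma subarc_subset_of_isPreconnected (hC : IsPreconnected C) (hCN : C ⊆ N) (hp : p ∈ C)
    (hq : q ∈ C) : subarc N p q ⊆ C :=
  sInter_subset_of_mem ⟨hC, hCN, hp, hq⟩

lemma isArc_image_Icc {γ : ℝ → X} (hγ : ContinuousOn γ (Icc 0 1)) (hinj : InjOn γ (Icc 0 1)) :
    IsArc (γ '' Icc 0 1) :=
  ⟨(Icc 0 1).domRestrict γ, hγ.domRestrict, injOn_iff_injective.1 hinj, range_domRestrict γ _⟩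

lemma IsArc.subarc_subset (hN : IsArc N) (hp : p ∈ N) (hq : q ∈ N) : subarc N p q ⊆ N := by
  obtain ⟨γ, hγ, -, rfl⟩ := hN
  exact subarc_subset_of_isPreconnected (isPreconnected_range hγ) Subset.rfl hp hq

variable [T2Space X]

lemma subarc_range {γ : unitInterval → X} (hγ : Continuous γ) (hinj : Function.Injective γ)
    (s t : unitInterval) : subarc (range γ) (γ s) (γ t) = γ '' uIcc s t := by
  refine (subarc_subset_of_isPreconnected (isPreconnected_uIcc.image _ hγ.continuousOn)
    (image_subset_range _ _) (mem_image_of_mem _ left_mem_uIcc)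
    (mem_image_of_mem _ right_mem_uIcc)).antisymm ?_
  rintro _ ⟨r, hr, rfl⟩ C ⟨hC, hCN, hs, ht⟩
  exact (hC.preimage_of_isClosedMap hinj hγ.isClosedMap hCN).ordConnected.uIcc_subset hs ht hr

lemma IsArc.isPreconnected_subarc (hN : IsArc N) (hp : p ∈ N) (hq : q ∈ N) :
    IsPreconnected (subarc N p q) := by
  obtain ⟨γ, hγ, hinj, rfl⟩ := hN
  obtain ⟨s, rfl⟩ := hp
  obtain ⟨t, rfl⟩ := hq
  rw [subarc_range hγ hinj]
  exact isPreconnected_uIcc.image _ hγ.continuousOn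

lemma IsArc.mem_subarc_or_mem_subarc (hN : IsArc N) (hp : p ∈ N) (hq : q ∈ N)
    (hx : x ∈ subarc N p q) (hy : y ∈ subarc N p q) :
    x ∈ subarc N p y ∨ y ∈ subarc N p x := by
  obtain ⟨γ, hγ, hinj, rfl⟩ := hN
  obtain ⟨s, rfl⟩ := hp
  obtain ⟨t, rfl⟩ := hq
  rw [subarc_range hγ hinj] at hx hy
  obtain ⟨a, ha, rfl⟩ := hx
  obtain ⟨b, hb, rfl⟩ := hy
  simp only [subarc_range hγ hinj, hinj.mem_set_image, mem_uIcc] at *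
  grind

lemma IsArc.exists_isOpen_forall_inter_nonempty (hN : IsArc N) (hp : p ∈ N) (hq : q ∈ N)
    (hU : IsOpen U) (hne : (subarc N p q ∩ U).Nonempty) :
    ∃ O, IsOpen O ∧ N ⊆ O ∧
      ∀ C, IsPreconnected C → C ⊆ O → p ∈ C → q ∈ C → (C ∩ U).Nonempty := by
  obtain ⟨γ, hγ, hinj, rfl⟩ := hN
  obtain ⟨s, rfl⟩ := hp
  obtain ⟨t, rfl⟩ := hq
  rw [subarc_range hγ hinj] at hne
  obtain ⟨_, ⟨r, hr, rfl⟩, hrU⟩ := hne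
  wlog hst : s ≤ t generalizing s t
  · obtain ⟨O, hO, hNO, h⟩ := this t s (uIcc_comm s t ▸ hr) (le_of_not_ge hst)
    exact ⟨O, hO, hNO, fun C hC hCO hs ht => h C hC hCO ht hs⟩
  rw [uIcc_of_le hst] at hr
  -- Removing `U` cuts the arc into two compact pieces, which have disjoint neighbourhoods.
  have hdisj : Disjoint (γ '' Iic r \ U) (γ '' Ici r \ U) := by
    refine disjoint_left.2 ?_
    rintro _ ⟨⟨a, ha, rfl⟩, haU⟩ ⟨⟨b, hb, hab⟩, -⟩
    obtain rfl := hinj hab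
    obtain rfl : b = r := le_antisymm ha hb
    exact haU hrU
  obtain ⟨V₁, V₂, hV₁, hV₂, h₁, h₂, hV⟩ := SeparatedNhds.of_isCompact_isCompact
    ((isClosed_Iic.isCompact.image hγ).diff hU) ((isClosed_Ici.isCompact.image hγ).diff hU) hdisj
  refine ⟨U ∪ (V₁ ∪ V₂), hU.union (hV₁.union hV₂), ?_, fun C hC hCO hs ht => ?_⟩
  · rintro _ ⟨a, rfl⟩
    have := le_total a r
    grind
  · by_contra! hCU
    have hC' : ∀ x ∈ C, x ∉ U := fun x hx hxU => notMem_empty x (hCU ▸ ⟨hx, hxU⟩)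
    obtain ⟨z, -, hz₁, hz₂⟩ := hC V₁ V₂ hV₁ hV₂ (by grind)
      ⟨γ s, hs, h₁ ⟨mem_image_of_mem γ hr.1, hC' _ hs⟩⟩
      ⟨γ t, ht, h₂ ⟨mem_image_of_mem γ hr.2, hC' _ ht⟩⟩
    exact disjoint_left.1 hV hz₁ hz₂

end Arc

section Rotation

variable {X : Type*} {K : Set X} {F : X → ℂ} {p q : X} {w : Circle}

/-- The zero set in `K` of the real part of `w F`. For the gradient `F` of a function on a plane
these are the nodal sets of its directional derivatives. -/
def nodalSet (F : X → ℂ) (K : Set X) (w : Circle) : Set X := {x ∈ K | (w * F x).re = 0}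

lemma mem_nodalSet_of_eq_zero (hp : p ∈ K) (hFp : F p = 0) : p ∈ nodalSet F K w :=
  ⟨hp, by simp [hFp]⟩

lemma nodalSet_neg : nodalSet F K (-w) = nodalSet F K w := by
  simp only [nodalSet, Circle.coe_neg, neg_mul, Complex.neg_re, neg_eq_zero]

variable [TopologicalSpace X]

lemma eventually_nodalSet_subset (hK : IsCompact K) (hF : ContinuousOn F K) {O : Set X}
    (hO : IsOpen O) (h : nodalSet F K w ⊆ O) : ∀ᶠ v in 𝓝 w, nodalSet F K v ⊆ O := by
  have hcpt : IsCompact (F '' (K \ O)) :=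
    (hK.diff hO).image_of_continuousOn (hF.mono sdiff_subset)
  have hev : ∀ᶠ v : Circle in 𝓝 w, ∀ z ∈ F '' (K \ O), (v * z).re ≠ 0 := by
    refine hcpt.eventually_forall_of_forall_eventually ?_
    rintro _ ⟨x, hx, rfl⟩
    have hcont : Continuous fun z : Circle × ℂ => (z.1 * z.2).re := by fun_prop
    exact hcont.continuousAt.eventually_ne fun h0 => hx.2 (h ⟨hx.1, h0⟩)
  filter_upwards [hev] with v hv x hx
  by_contra hxO
  exact hv _ (mem_image_of_mem F ⟨hx.1, hxO⟩) hx.2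

lemma eventually_subarc_nodalSet_inter_nonempty [T2Space X] (hK : IsCompact K)
    (hF : ContinuousOn F K) (harc : ∀ v, IsArc (nodalSet F K v)) (hp : p ∈ K) (hFp : F p = 0)
    (hq : q ∈ K) (hFq : F q = 0) {U : Set X} (hU : IsOpen U)
    (hne : (subarc (nodalSet F K w) p q ∩ U).Nonempty) :
    ∀ᶠ v in 𝓝 w, (subarc (nodalSet F K v) p q ∩ U).Nonempty := by
  have hpN (v : Circle) : p ∈ nodalSet F K v := mem_nodalSet_of_eq_zero hp hFp
  have hqN (v : Circle) : q ∈ nodalSet F K v := mem_nodalSet_of_eq_zero hq hFq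
  obtain ⟨O, hO, hNO, hmeet⟩ :=
    (harc w).exists_isOpen_forall_inter_nonempty (hpN w) (hqN w) hU hne
  filter_upwards [eventually_nodalSet_subset hK hF hO hNO] with v hv
  exact hmeet _ ((harc v).isPreconnected_subarc (hpN v) (hqN v))
    (((harc v).subarc_subset (hpN v) (hqN v)).trans hv) left_mem_subarc right_mem_subarc

variable {Φ : OpenPartialHomeomorph X ℂ}

/-- In a chart `Φ` centred at `p`, the nodal set of `w` consists of two half-branches issuing from
`p`. This is the one on which `w Φ` points upwards; the other one is the half-branch of `-w`. -/
def halfBranch (Φ : OpenPartialHomeomorph X ℂ) (w : Circle) : Set X :=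
  {x ∈ Φ.source | (w * Φ x).re = 0 ∧ 0 ≤ (w * Φ x).im}

lemma halfBranch_subset_nodalSet (hΦK : Φ.source ⊆ K) : halfBranch Φ w ⊆ nodalSet Φ K w :=
  fun _ hx => ⟨hΦK hx.1, hx.2.1⟩

lemma isPreconnected_halfBranch (hconv : Convex ℝ Φ.target) :
    IsPreconnected (halfBranch Φ w) := by
  let ray : Set ℂ := LinearMap.mulLeft ℝ (w : ℂ) ⁻¹' {z | z.re = 0 ∧ 0 ≤ z.im}
  have hray_convex : Convex ℝ ray :=
    ((convex_hyperplane Complex.reLm.isLinear 0).inter (convex_halfSpace_im_ge 0)).linear_preimage _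
  have himage : halfBranch Φ w = Φ.symm '' (Φ.target ∩ ray) := by
    rw [Φ.symm_image_target_inter_eq, Φ.source_inter_preimage_target_inter]
    rfl
  rw [himage]
  exact (hconv.inter hray_convex).isPreconnected.image _
    (Φ.continuousOn_symm.mono inter_subset_left)

/-- The set of all `w` such that the sub-arc of the nodal set of `w` from the centre `p` of the
chart `Φ` to `q` departs from `p` along the half-branch of `w`. -/
def departureSet (Φ : OpenPartialHomeomorph X ℂ) (K : Set X) (p q : X) : Set Circle :=
  {w | ∃ x ∈ subarc (nodalSet Φ K w) p q, x ∈ Φ.source ∧ 0 < (w * Φ x).im}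

variable [T2Space X]

lemma isOpen_departureSet (hK : IsCompact K) (hΦ : ContinuousOn Φ K)
    (harc : ∀ w, IsArc (nodalSet Φ K w)) (hp : p ∈ K) (hΦp : Φ p = 0) (hq : q ∈ K)
    (hΦq : Φ q = 0) : IsOpen (departureSet Φ K p q) := by
  refine isOpen_iff_mem_nhds.2 ?_
  rintro w ⟨x, hxA, hx, hpos⟩
  have hcont : ContinuousAt (fun z : Circle × X => (z.1 * Φ z.2).im) (w, x) := by
    have := Φ.continuousAt hx
    fun_prop
  have hnear : ∀ᶠ z : Circle × X in 𝓝 (w, x), z.2 ∈ Φ.source ∧ 0 < (z.1 * Φ z.2).im :=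
    (continuousAt_snd.eventually (Φ.open_source.mem_nhds hx)).and (hcont.eventually_const_lt hpos)
  obtain ⟨T, U, hT, hwT, hU, hxU, hTU⟩ := mem_nhds_prod_iff'.1 hnear
  filter_upwards [hT.mem_nhds hwT,
    eventually_subarc_nodalSet_inter_nonempty hK hΦ harc hp hΦp hq hΦq hU ⟨x, hxA, hxU⟩]
    with v hv ⟨y, hyA, hyU⟩
  exact ⟨y, hyA, hTU (mk_mem_prod hv hyU)⟩

lemma mem_or_neg_mem_departureSet (harc : IsArc (nodalSet Φ K w)) (hΦK : Φ.source ⊆ K)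
    (hp : p ∈ Φ.source) (hΦp : Φ p = 0) (hq : q ∈ K) (hΦq : Φ q = 0) (hpq : p ≠ q) :
    w ∈ departureSet Φ K p q ∨ -w ∈ departureSet Φ K p q := by
  have hpN : p ∈ nodalSet Φ K w := mem_nodalSet_of_eq_zero (hΦK hp) hΦp
  have hqN : q ∈ nodalSet Φ K w := mem_nodalSet_of_eq_zero hq hΦq
  have hacc := (harc.isPreconnected_subarc hpN hqN).preperfect_of_nontrivial
    ⟨p, left_mem_subarc, q, right_mem_subarc, hpq⟩ p left_mem_subarc
  obtain ⟨x, ⟨hx, hxA⟩, hxp⟩ := accPt_iff_nhds.1 hacc _ (Φ.open_source.mem_nhds hp)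
  have him : (w * Φ x).im ≠ 0 := fun him => hxp <| Φ.injOn hx hp <| by
    have hzero : w * Φ x = 0 := Complex.ext (harc.subarc_subset hpN hqN hxA).2 him
    simpa [hΦp] using hzero
  rcases him.lt_or_gt with hneg | hpos
  · refine Or.inr ⟨x, by rwa [nodalSet_neg], hx, ?_⟩
    rwa [Circle.coe_neg, neg_mul, Complex.neg_im, neg_pos]
  · exact Or.inl ⟨x, hxA, hx, hpos⟩

lemma neg_notMem_departureSet (harc : IsArc (nodalSet Φ K w)) (hconv : Convex ℝ Φ.target)
    (hΦK : Φ.source ⊆ K) (hp : p ∈ Φ.source) (hΦp : Φ p = 0) (hq : q ∈ K) (hΦq : Φ q = 0)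
    (hw : w ∈ departureSet Φ K p q) : -w ∉ departureSet Φ K p q := by
  rintro ⟨y, hyA, hy, hypos⟩
  obtain ⟨x, hxA, hx, hxpos⟩ := hw
  rw [nodalSet_neg] at hyA
  have hpN : p ∈ nodalSet Φ K w := mem_nodalSet_of_eq_zero (hΦK hp) hΦp
  have hqN : q ∈ nodalSet Φ K w := mem_nodalSet_of_eq_zero hq hΦq
  have hAN := harc.subarc_subset hpN hqN
  have hpH (v : Circle) : p ∈ halfBranch Φ v := by simp [halfBranch, hp, hΦp]
  have hHN : halfBranch Φ (-w) ⊆ nodalSet Φ K w := nodalSet_neg ▸ halfBranch_subset_nodalSet hΦK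
  have hxH : x ∈ halfBranch Φ w := ⟨hx, (hAN hxA).2, hxpos.le⟩
  have hyH : y ∈ halfBranch Φ (-w) := ⟨hy, (nodalSet_neg.ge (hAN hyA)).2, hypos.le⟩
  rcases harc.mem_subarc_or_mem_subarc hpN hqN hxA hyA with hxy | hyx
  · have := (subarc_subset_of_isPreconnected (isPreconnected_halfBranch hconv) hHN
      (hpH _) hyH hxy).2.2
    rw [Circle.coe_neg, neg_mul, Complex.neg_im] at this
    linarith
  · have := (subarc_subset_of_isPreconnected (isPreconnected_halfBranch hconv)
      (halfBranch_subset_nodalSet hΦK) (hpH _) hxH hyx).2.2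
    rw [Circle.coe_neg, neg_mul, Complex.neg_im] at hypos
    linarith

lemma eq_of_isArc_nodalSet_of_chart (hK : IsCompact K) (hΦ : ContinuousOn Φ K)
    (harc : ∀ w, IsArc (nodalSet Φ K w)) (hconv : Convex ℝ Φ.target) (hΦK : Φ.source ⊆ K)
    (hp : p ∈ Φ.source) (hΦp : Φ p = 0) (hq : q ∈ K) (hΦq : Φ q = 0) : p = q := by
  by_contra hpq
  have hneg (w : Circle) : -w ∈ departureSet Φ K p q ↔ w ∉ departureSet Φ K p q :=
    ⟨fun hw => neg_neg w ▸ neg_notMem_departureSet (harc (-w)) hconv hΦK hp hΦp hq hΦq hw,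
      (mem_or_neg_mem_departureSet (harc w) hΦK hp hΦp hq hΦq hpq).resolve_left⟩
  have hopen : IsOpen (departureSet Φ K p q) :=
    isOpen_departureSet hK hΦ harc (hΦK hp) hΦp hq hΦq
  have hclopen : IsClopen (departureSet Φ K p q) := by
    refine ⟨⟨?_⟩, hopen⟩
    convert hopen.preimage (continuous_neg (G := Circle)) using 1
    ext w
    exact (hneg w).symm
  rcases isClopen_iff.1 hclopen with h | h <;> simpa [h] using hneg 1

end Rotation

section Chart

variable {X : Type*} [TopologicalSpace X] {K : Set X} {p q : X}

lemma exists_openPartialHomeomorph_convex_target {V : Type*} [SeminormedAddCommGroup V]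
    [NormedSpace ℝ V] (Φ : OpenPartialHomeomorph X V) (hp : p ∈ Φ.source) (hK : K ∈ 𝓝 p) :
    ∃ Ψ : OpenPartialHomeomorph X V,
      ⇑Ψ = Φ ∧ p ∈ Ψ.source ∧ Ψ.source ⊆ K ∧ Convex ℝ Ψ.target := by
  have hnhds : Φ.target ∩ Φ.symm ⁻¹' K ∈ 𝓝 (Φ p) :=
    inter_mem (Φ.open_target.mem_nhds (Φ.map_source hp)) (Φ.tendsto_symm hp hK)
  obtain ⟨r, hr, hball⟩ := Metric.mem_nhds_iff.1 hnhds
  refine ⟨(Φ.symm.restrOpen (Metric.ball (Φ p) r) Metric.isOpen_ball).symm, rfl,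
    ⟨hp, Metric.mem_ball_self hr⟩, ?_, ?_⟩
  · rintro x ⟨hx, hxr⟩
    simpa [Φ.left_inv hx] using (hball hxr).2
  · change Convex ℝ (Φ.target ∩ Metric.ball (Φ p) r)
    rw [inter_eq_right.2 (hball.trans inter_subset_left)]
    exact convex_ball _ _

theorem eq_of_isArc_nodalSet [T2Space X] {F : X → ℂ} (hK : IsCompact K) (hF : ContinuousOn F K)
    (harc : ∀ w, IsArc (nodalSet F K w)) (hloc : IsLocalHomeomorphOn F {p}) (hp : K ∈ 𝓝 p)
    (hFp : F p = 0) (hq : q ∈ K) (hFq : F q = 0) : p = q := by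
  obtain ⟨Φ, hpΦ, rfl⟩ := hloc p rfl
  obtain ⟨Ψ, hΨ, hpΨ, hΨK, hconv⟩ := exists_openPartialHomeomorph_convex_target Φ hpΦ hp
  rw [← hΨ] at hF harc hFp hFq
  exact eq_of_isArc_nodalSet_of_chart hK hF harc hconv hΨK hpΨ hFp hq hFq

end Chart

section Analysis

variable {E F : Type*} [NormedAddCommGroup E] [NormedSpace ℝ E] [NormedAddCommGroup F]
  [NormedSpace ℝ F] {s : Set E} {x : E}

lemma mem_tangentConeAt_of_fderiv_neg {f : E → ℝ} {f' : E →L[ℝ] ℝ} (hf : HasFDerivAt f f' x)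
    (hs : {y | f y < f x} ⊆ s) {v : E} (hv : f' v < 0) : v ∈ tangentConeAt ℝ s x := by
  have hslope : ∀ᶠ t in 𝓝[>] (0 : ℝ), t⁻¹ • (f (x + t • v) - f x) < 0 :=
    (hf.hasLineDerivAt v).tendsto_slope_zero_right.eventually_lt_const hv
  refine mem_tangentConeAt_of_add_smul_mem (tendsto_id'.2 (nhdsGT_le_nhdsNE 0)) ?_
  filter_upwards [hslope, self_mem_nhdsWithin] with t ht htpos
  exact hs (sub_neg.1 ((smul_neg_iff_of_pos_left (inv_pos.2 htpos)).1 ht))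

lemma uniqueDiffWithinAt_of_sublevel_subset {f : E → ℝ} {f' : E →L[ℝ] ℝ} (hf : HasFDerivAt f f' x)
    (hf' : f' ≠ 0) (hs : {y | f y < f x} ⊆ s) : UniqueDiffWithinAt ℝ s x := by
  have hcone : {v | f' v < 0} ⊆ tangentConeAt ℝ s x :=
    fun _ => mem_tangentConeAt_of_fderiv_neg hf hs
  obtain ⟨v, hv⟩ : {v | f' v < 0}.Nonempty := by
    obtain ⟨v, hv⟩ := DFunLike.exists_ne hf'
    rcases hv.lt_or_gt with hneg | hpos
    · exact ⟨v, hneg⟩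
    · exact ⟨-v, by simpa using hpos⟩
  refine ⟨?_, mem_closure_of_nonempty_tangentConeAt ⟨v, hcone hv⟩⟩
  have hspan : Submodule.span ℝ (tangentConeAt ℝ s x) = ⊤ :=
    Submodule.eq_top_of_nonempty_interior' _ ⟨v, interior_maximal
      (hcone.trans Submodule.subset_span) (isOpen_lt f'.continuous continuous_const) hv⟩
  simp [hspan]

lemma fderivWithin_clm_apply_smul {G : Type*} [NormedAddCommGroup G] [NormedSpace ℝ G]
    (hs : UniqueDiffWithinAt ℝ s x) (c : E → F →L[ℝ] G) (r : ℝ) (v : F) :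
    fderivWithin ℝ (fun y => c y (r • v)) s x = r • fderivWithin ℝ (fun y => c y v) s x := by
  have hsmul : (fun y => c y (r • v)) = r • fun y => c y v := by
    ext y
    simp
  rw [hsmul, fderivWithin_const_smul_field r hs]

lemma contDiffAt_fderivWithin {u : E → F} (hu : ContDiffOn ℝ 2 u s) (hUD : UniqueDiffOn ℝ s)
    (hx : s ∈ 𝓝 x) : ContDiffAt ℝ 1 (fderivWithin ℝ u s) x :=
  (hu.fderivWithin hUD (by norm_num)).contDiffAt hx

lemma injective_fderivWithin_fderivWithin {u : E → F} (hu : ContDiffOn ℝ 2 u s)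
    (hUD : UniqueDiffOn ℝ s) (hx : s ∈ 𝓝 x)
    (hnd : ∀ v ≠ 0, fderivWithin ℝ (fun y => fderivWithin ℝ u s y v) s x ≠ 0) :
    Function.Injective (fderivWithin ℝ (fderivWithin ℝ u s) s x) := by
  have hxs := mem_of_mem_nhds hx
  have hdiff : DifferentiableWithinAt ℝ (fderivWithin ℝ u s) s x :=
    ((contDiffAt_fderivWithin hu hUD hx).differentiableAt one_ne_zero).differentiableWithinAt
  have hsymm : IsSymmSndFDerivWithinAt ℝ u s x :=
    (hu x hxs).isSymmSndFDerivWithinAt (by simp) hUD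
      (subset_closure (mem_interior_iff_mem_nhds.2 hx)) hxs
  refine (injective_iff_map_eq_zero _).2 fun v hv => by_contra fun hv0 => hnd v hv0 ?_
  ext w
  rw [fderivWithin_clm_apply (hUD x hxs) hdiff (differentiableWithinAt_const v)]
  simp [hsymm.eq w v, hv]

lemma isLocalHomeomorphOn_of_injective_fderiv [FiniteDimensional ℝ E] [FiniteDimensional ℝ F]
    (hdim : finrank ℝ E = finrank ℝ F) {f : E → F} (hf : ContDiffAt ℝ 1 f x)
    (hinj : Function.Injective (fderiv ℝ f x)) : IsLocalHomeomorphOn f {x} := by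
  have := FiniteDimensional.complete ℝ E
  let L : E ≃L[ℝ] F := (LinearEquiv.ofInjectiveOfFinrankEq
    (fderiv ℝ f x : E →ₗ[ℝ] F) hinj hdim).toContinuousLinearEquiv
  have hL : HasStrictFDerivAt f (L : E →L[ℝ] F) x := hf.hasStrictFDerivAt one_ne_zero
  rintro _ rfl
  exact ⟨hL.toOpenPartialHomeomorph f, hL.mem_toOpenPartialHomeomorph_source, rfl⟩

/-- Rotating the image of a functional in `ℂ` amounts to evaluating it in another direction. -/
lemma exists_dual_equiv_complex (hE : finrank ℝ E = 2) :
    ∃ T : StrongDual ℝ E ≃L[ℝ] ℂ, ∀ w : Circle, ∃ v ≠ 0, ∀ ℓ, (w * T ℓ).re = ℓ v := by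
  have : FiniteDimensional ℝ E := Module.finite_of_finrank_eq_succ hE
  let e : ℂ ≃L[ℝ] E := .ofFinrankEq (by simp [hE])
  refine ⟨(e.arrowCongr (.refl ℝ ℝ)).symm.trans
    (InnerProductSpace.toDual ℝ ℂ).symm.toContinuousLinearEquiv, fun w =>
    ⟨e (starRingEnd ℂ w), by simp, fun ℓ => ?_⟩⟩
  have hinner (z : ℂ) : (w * z).re = ⟪z, starRingEnd ℂ w⟫ := by simp [mul_comm]
  rw [hinner]
  exact InnerProductSpace.toDual_symm_apply

lemma exists_mem_fderivWithin_eq_zero {Ω : Set E} (hopen : IsOpen Ω) (hK : IsCompact (closure Ω))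
    {u : E → ℝ} (hu : ContinuousOn u (closure Ω)) (hmax : ∃ x ∈ Ω, ∀ y ∈ frontier Ω, u y < u x) :
    ∃ p ∈ Ω, fderivWithin ℝ u (closure Ω) p = 0 := by
  obtain ⟨x, hx, hux⟩ := hmax
  obtain ⟨p, hp, hmaxp⟩ := hK.exists_isLocalMax_mem_open subset_closure hu (subset_closure hx)
    (fun y hy => hux y (hopen.frontier_eq ▸ hy)) hopen
  refine ⟨p, hp, ?_⟩
  rw [fderivWithin_of_mem_nhds (mem_of_superset (hopen.mem_nhds hp) subset_closure)]
  exact hmaxp.fderiv_eq_zero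

lemma eq_of_fderivWithin_eq_zero (hE : finrank ℝ E = 2) (hs : IsCompact s)
    (hUD : UniqueDiffOn ℝ s) {u : E → ℝ} (hu : ContDiffOn ℝ 2 u s)
    (harc : ∀ v ≠ 0, IsArc {x ∈ s | fderivWithin ℝ u s x v = 0}) {p q : E} (hp : s ∈ 𝓝 p)
    (hnd : ∀ v ≠ 0, fderivWithin ℝ (fun y => fderivWithin ℝ u s y v) s p ≠ 0)
    (hp0 : fderivWithin ℝ u s p = 0) (hq : q ∈ s) (hq0 : fderivWithin ℝ u s q = 0) : p = q := by
  have : FiniteDimensional ℝ E := Module.finite_of_finrank_eq_succ hE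
  obtain ⟨T, hT⟩ := exists_dual_equiv_complex hE
  have hcont : ContinuousOn (T ∘ fderivWithin ℝ u s) s :=
    T.continuous.comp_continuousOn (hu.continuousOn_fderivWithin hUD one_le_two)
  have hnodal (w : Circle) : IsArc (nodalSet (T ∘ fderivWithin ℝ u s) s w) := by
    obtain ⟨v, hv, hTv⟩ := hT w
    simpa only [nodalSet, Function.comp_apply, hTv] using harc v hv
  have hinj : Function.Injective (fderiv ℝ (T ∘ fderivWithin ℝ u s) p) := by
    rw [T.comp_fderiv, ← fderivWithin_of_mem_nhds hp]
    exact T.injective.comp (injective_fderivWithin_fderivWithin hu hUD hp hnd)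
  have hloc : IsLocalHomeomorphOn (T ∘ fderivWithin ℝ u s) {p} :=
    isLocalHomeomorphOn_of_injective_fderiv (by simp [hE])
      (T.contDiff.contDiffAt.comp p (contDiffAt_fderivWithin hu hUD hp)) hinj
  exact eq_of_isArc_nodalSet hs hcont hnodal hloc hp (by simp [hp0]) hq (by simp [hq0])

theorem unique_critical_point_general (hE : finrank ℝ E = 2) {Ω : Set E} (hopen : IsOpen Ω)
    (hbdd : Bornology.IsBounded Ω) (hUD : UniqueDiffOn ℝ (closure Ω)) {u : E → ℝ}
    (hu : ContDiffOn ℝ 2 u (closure Ω)) (hmax : ∃ x ∈ Ω, ∀ y ∈ frontier Ω, u y < u x)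
    (harc : ∀ v ≠ 0, IsArc {x ∈ closure Ω | fderivWithin ℝ u (closure Ω) x v = 0})
    (hnd : ∀ v ≠ 0, ∀ x ∈ Ω, fderivWithin ℝ u (closure Ω) x = 0 →
      fderivWithin ℝ (fun y => fderivWithin ℝ u (closure Ω) y v) (closure Ω) x ≠ 0) :
    ∃! x : E, x ∈ Ω ∧ fderivWithin ℝ u (closure Ω) x = 0 := by
  have : FiniteDimensional ℝ E := Module.finite_of_finrank_eq_succ hE
  have := FiniteDimensional.proper ℝ E
  have hK : IsCompact (closure Ω) := hbdd.isCompact_closure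
  obtain ⟨p, hp, hp0⟩ := exists_mem_fderivWithin_eq_zero hopen hK hu.continuousOn hmax
  have hpK : closure Ω ∈ 𝓝 p := mem_of_superset (hopen.mem_nhds hp) subset_closure
  exact ⟨p, ⟨hp, hp0⟩, fun q ⟨hq, hq0⟩ => (eq_of_fderivWithin_eq_zero hE hK hUD hu harc hpK
    (fun v hv => hnd v hv p hp hp0) hp0 (subset_closure hq) hq0).symm⟩

end Analysis

lemma norm_smul_dirVec_arg (z : ℂ) : ‖z‖ • dirVec z.arg = Complex.orthonormalBasisOneI.repr z := by
  ext i
  fin_cases i <;> simp [dirVec, e2]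

lemma forall_ne_zero_of_forall_dirVec {P : E2 → Prop} (h : ∀ θ, P (dirVec θ))
    (hsmul : ∀ r : ℝ, r ≠ 0 → ∀ v, P v → P (r • v)) : ∀ v ≠ 0, P v := by
  intro v hv
  obtain ⟨z, rfl⟩ := Complex.orthonormalBasisOneI.repr.surjective v
  rw [← norm_smul_dirVec_arg]
  exact hsmul _ (by simpa using hv) _ (h _)

lemma C2StrictlyConvexDomain.uniqueDiffOn_closure {Ω : Set E2} (hΩ : C2StrictlyConvexDomain Ω) :
    UniqueDiffOn ℝ (closure Ω) := by
  obtain ⟨hopen, -, -, f, hf, hΩf, hfr, hgrad, -⟩ := hΩ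
  intro x hx
  by_cases hxΩ : x ∈ Ω
  · exact uniqueDiffWithinAt_of_mem_nhds (mem_of_superset (hopen.mem_nhds hxΩ) subset_closure)
  have hxfr : x ∈ frontier Ω := hopen.frontier_eq ▸ ⟨hx, hxΩ⟩
  have hfx : f x = 0 := hfr.le hxfr
  have hdf : HasFDerivAt f (fderiv ℝ f x) x := (hf.differentiable two_ne_zero x).hasFDerivAt
  refine uniqueDiffWithinAt_of_sublevel_subset hdf (fun h0 => hgrad x hxfr ?_) ?_
  · simp [gradient, h0]
  · rw [hfx, ← hΩf]
    exact subset_closure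


/-- **Theorem 9, after Cabré–Chanillo.**  Let `u ∈ C²(closure Ω)` be positive
on the bounded strictly convex domain `Ω`, vanishing on `∂Ω` with nonvanishing boundary
gradient, and suppose that for every direction `e_θ` the nodal set
`N_θ = {x ∈ closure Ω : Du·e_θ = 0}` is a smooth embedded curve and
`M_θ = {x ∈ N_θ : D(Du·e_θ) = 0}` is empty.  Then `u` has a unique critical point in `Ω`. -/
theorem unique_critical_point (Ω : Set E2) (hΩ : C2StrictlyConvexDomain Ω)
    (u : E2 → ℝ) (hu : ContDiffOn ℝ 2 u (closure Ω))
    (hpos : ∀ x ∈ Ω, 0 < u x) (hbd : ∀ x ∈ frontier Ω, u x = 0)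
    (hgrad : ∀ x ∈ frontier Ω, fderivWithin ℝ u (closure Ω) x ≠ 0)
    (hN : ∀ θ : ℝ, ∃ γ : ℝ → E2, ContDiff ℝ 1 γ ∧ InjOn γ (Icc (0:ℝ) 1) ∧
      (∀ t ∈ Icc (0:ℝ) 1, deriv γ t ≠ 0) ∧
      γ '' Icc (0:ℝ) 1 =
        {x ∈ closure Ω | fderivWithin ℝ u (closure Ω) x (dirVec θ) = 0})
    (hM : ∀ θ : ℝ, ∀ x ∈ closure Ω, fderivWithin ℝ u (closure Ω) x (dirVec θ) = 0 →
      fderivWithin ℝ (fun y => fderivWithin ℝ u (closure Ω) y (dirVec θ))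
        (closure Ω) x ≠ 0) :
    ∃! x : E2, x ∈ Ω ∧ fderivWithin ℝ u (closure Ω) x = 0 := by
  have hUD := hΩ.uniqueDiffOn_closure
  obtain ⟨x, hx⟩ := hΩ.2.2.1
  refine unique_critical_point_general (by simp) hΩ.1 hΩ.2.1 hUD hu
    ⟨x, hx, fun y hy => hbd y hy ▸ hpos x hx⟩
    (forall_ne_zero_of_forall_dirVec (fun θ => ?_) fun r hr v hv => by simpa [hr] using hv)
    (forall_ne_zero_of_forall_dirVec (fun θ x hx h0 => hM θ x (subset_closure hx) (by simp [h0]))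
      fun r hr v hv x hx h0 => ?_)
  · obtain ⟨γ, hγ, hinj, -, himg⟩ := hN θ
    exact himg ▸ isArc_image_Icc hγ.continuous.continuousOn hinj
  · rw [fderivWithin_clm_apply_smul (hUD x (subset_closure hx))]
    exact smul_ne_zero hr (hv x hx h0)
end
end

section
/- Let Ω ⊂ ℝ² be a bounded open C² domain and v ∈ C²(closure Ω) a positive function on Ω with v = 0 on ∂Ω. If v has a unique critical point in Ω, then the following equivalence holds: every superlevel set {x ∈ Ω : v(x) > c}, 0 ≤ c < max v, is convex if and only if L_v ≤ 0 at every point of Ω. -/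
/-!
If the second derivative of `v` at `p` is positive on some `b` tangent to the level set of `v`
through `p`, then `v` has a strict local minimum at `p` along the line `p + t b`. Two symmetric
points of that line lie in `{v > v p}` while their midpoint `p` does not, so this superlevel set is
not convex.

Conversely, every component of `{v > c}` contains a local maximum of `v`, hence the critical point,
so `{v > c}` is connected and any two of its points are joined by a path in it. Fix one end `x` and
let the other end `z` run along the path: with the segment from `x` to `z` sweep the thin
*hourglass* formed by the balls of radius `k (1 - t + t²)` around `x + t (z - x)`, `0 ≤ t ≤ 1`. At a
first point `p = x + t (z - x) + k (1 - t + t²) w` where it touches `{v = c}`, the restriction of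
`v` to the hourglass is minimal. Minimality on the ball through `p` gives `Dv(p) w < 0`, and the arc
obtained by varying `t` alone has acceleration `2 k w`, so minimality along the arc makes the second
derivative of `v` positive on its velocity, which is tangent to the level set. It is this bending of
the arcs that makes the weak inequality `L_v ≤ 0` suffice to exclude touching. Levels attained on
the boundary are approximated by larger ones.

In the plane the tangent vectors are the multiples of `(v_y, -v_x)`, on which the second derivative
of `v` is `L_v`.
-/

noncomputable section
open Set
open scoped RealInnerProductSpace

/-- `Ω ⊂ ℝ²` is a bounded domain with `C²` boundary. -/
def C2Domain (Ω : Set E2) : Prop :=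
  IsOpen Ω ∧ Bornology.IsBounded Ω ∧ Ω.Nonempty ∧
    ∃ f : E2 → ℝ, ContDiff ℝ 2 f ∧ Ω = {x | f x < 0} ∧ frontier Ω = {x | f x = 0} ∧
      ∀ x ∈ frontier Ω, gradient f x ≠ 0

open Filter Topology Metric

/-! ### Second derivatives -/

section SecondDerivative

lemma eventually_lt_of_deriv_deriv_pos {f : ℝ → ℝ} {x₀ : ℝ}
    (hf : ∀ᶠ x in 𝓝 x₀, DifferentiableAt ℝ f x) (hd : deriv f x₀ = 0)
    (hdd : 0 < deriv (deriv f) x₀) : ∀ᶠ x in 𝓝[≠] x₀, f x₀ < f x := by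
  -- Subtracting a small quadratic keeps the second derivative positive, so the non-strict test
  -- bounds `f` below by a strictly convex parabola.
  set A := deriv (deriv f) x₀
  set F : ℝ → ℝ := fun x ↦ f x - A / 4 * (x - x₀) ^ 2 with hF
  have hquad (x : ℝ) : HasDerivAt (fun x ↦ A / 4 * (x - x₀) ^ 2) (A / 2 * (x - x₀)) x :=
    ((((hasDerivAt_id x).sub_const x₀).pow 2).const_mul (A / 4)).congr_deriv <| by
      simp only [Nat.cast_ofNat, id_eq, Nat.add_one_sub_one, pow_one, mul_one]
      ring
  have hF' : deriv F =ᶠ[𝓝 x₀] fun x ↦ deriv f x - A / 2 * (x - x₀) :=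
    hf.mono fun x hx ↦ (hx.hasDerivAt.sub (hquad x)).deriv
  have hF'' : deriv (deriv F) x₀ = A / 2 := by
    have hf' : HasDerivAt (deriv f) A x₀ := (differentiableAt_of_deriv_ne_zero hdd.ne').hasDerivAt
    rw [hF'.deriv_eq]
    refine ((hf'.sub (((hasDerivAt_id x₀).sub_const x₀).const_mul (A / 2))).congr_deriv ?_).deriv
    ring
  have hmin : IsLocalMin F x₀ :=
    isLocalMin_of_deriv_deriv_pos (by rw [hF'']; positivity) (by simp [hF'.eq_of_nhds, hd])
      (hf.self_of_nhds.hasDerivAt.sub (hquad x₀)).continuousAt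
  filter_upwards [hmin.filter_mono nhdsWithin_le_nhds, self_mem_nhdsWithin] with x hx hne
  have hgap : 0 < A / 4 * (x - x₀) ^ 2 := by
    have := sub_ne_zero.2 hne
    positivity
  have : f x₀ ≤ f x - A / 4 * (x - x₀) ^ 2 := by simpa [hF] using hx
  linarith

lemma deriv_deriv_nonneg_of_isLocalMin {f : ℝ → ℝ} {x₀ : ℝ} (h : IsLocalMin f x₀)
    (hf : ContinuousAt f x₀) : 0 ≤ deriv (deriv f) x₀ := by
  by_contra! hneg
  have hmax : IsLocalMax f x₀ := isLocalMax_of_deriv_deriv_neg hneg h.deriv_eq_zero hf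
  have hconst : f =ᶠ[𝓝 x₀] fun _ ↦ f x₀ := by
    filter_upwards [h, hmax] with x hge hle using le_antisymm hle hge
  simp [hconst.deriv.deriv_eq] at hneg

variable {E : Type*} [NormedAddCommGroup E] [NormedSpace ℝ E]

/-- The parabola through `p` with velocity `b` at `t = 0` and acceleration `2 d`; a line if
`d = 0`. -/
def parabola (p b d : E) (t : ℝ) : E := p + t • b + t ^ 2 • d

lemma hasDerivAt_parabola (p b d : E) (t : ℝ) :
    HasDerivAt (parabola p b d) (b + (2 * t) • d) t := by
  have hb : HasDerivAt (fun t : ℝ ↦ t • b) b t := by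
    simpa using (hasDerivAt_id t).smul_const b
  have hd : HasDerivAt (fun t : ℝ ↦ t ^ 2 • d) ((2 * t) • d) t := by
    simpa using (hasDerivAt_pow 2 t).smul_const d
  exact (hb.const_add p).add hd

lemma parabola_zero (p b d : E) : parabola p b d 0 = p := by simp [parabola]

variable {v : E → ℝ} {p : E}

lemma eventually_hasDerivAt_comp_parabola (hv : ContDiffAt ℝ 2 v p) (b d : E) :
    ∀ᶠ t in 𝓝 (0 : ℝ), HasDerivAt (v ∘ parabola p b d)
      (fderiv ℝ v (parabola p b d t) (b + (2 * t) • d)) t := by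
  have hlim : Tendsto (parabola p b d) (𝓝 0) (𝓝 p) := by
    simpa [parabola_zero] using (hasDerivAt_parabola p b d 0).continuousAt.tendsto
  filter_upwards [hlim.eventually (hv.eventually (by simp))] with t ht
  exact (ht.differentiableAt (by simp)).hasFDerivAt.comp_hasDerivAt t (hasDerivAt_parabola p b d t)

lemma deriv_comp_parabola_zero (hv : ContDiffAt ℝ 2 v p) (b d : E) :
    deriv (v ∘ parabola p b d) 0 = fderiv ℝ v p b := by
  simpa [parabola_zero] using (eventually_hasDerivAt_comp_parabola hv b d).self_of_nhds.deriv

lemma differentiableAt_fderiv (hv : ContDiffAt ℝ 2 v p) : DifferentiableAt ℝ (fderiv ℝ v) p :=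
  (hv.fderiv_right (m := 1) (by norm_num)).differentiableAt (by simp)

lemma deriv_deriv_comp_parabola_zero (hv : ContDiffAt ℝ 2 v p) (b d : E) :
    deriv (deriv (v ∘ parabola p b d)) 0 = fderiv ℝ (fderiv ℝ v) p b b + 2 * fderiv ℝ v p d := by
  have hderiv : deriv (v ∘ parabola p b d) =ᶠ[𝓝 0]
      fun t ↦ fderiv ℝ v (parabola p b d t) (b + (2 * t) • d) :=
    (eventually_hasDerivAt_comp_parabola hv b d).mono fun t ht ↦ ht.deriv
  have hD : HasDerivAt (fderiv ℝ v ∘ parabola p b d) (fderiv ℝ (fderiv ℝ v) p b) 0 := by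
    have hD₀ : HasFDerivAt (fderiv ℝ v) (fderiv ℝ (fderiv ℝ v) p) (parabola p b d 0) := by
      simpa [parabola_zero] using (differentiableAt_fderiv hv).hasFDerivAt
    simpa using hD₀.comp_hasDerivAt 0 (hasDerivAt_parabola p b d 0)
  have hvel : HasDerivAt (fun t : ℝ ↦ b + (2 * t) • d) ((2 : ℝ) • d) 0 := by
    simpa using (((hasDerivAt_id (0 : ℝ)).const_mul 2).smul_const d).const_add b
  rw [hderiv.deriv_eq]
  simpa [parabola_zero] using (hD.clm_apply hvel).deriv

end SecondDerivative

/-! ### Tangential concavity -/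

section TangentiallyConcave

variable {E : Type*} [NormedAddCommGroup E] [NormedSpace ℝ E] {v : E → ℝ} {p : E}

/-- The second derivative of `v` at `p` is nonpositive on the kernel of the first one. At a
noncritical point this says that the superlevel set of `v` is infinitesimally convex at `p`, and in
the plane it is the condition `L_v ≤ 0`. -/
def TangentiallyConcaveAt (v : E → ℝ) (p : E) : Prop :=
  ∀ b, fderiv ℝ v p b = 0 → fderiv ℝ (fderiv ℝ v) p b b ≤ 0

lemma tangentiallyConcaveAt_of_convex_superlevel {Ω : Set E} (hΩ : Ω ∈ 𝓝 p)
    (hv : ContDiffAt ℝ 2 v p) (hconv : Convex ℝ {x ∈ Ω | v p < v x}) :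
    TangentiallyConcaveAt v p := by
  intro b hb
  by_contra! hbb
  set γ : ℝ → E := parabola p b 0 with hγ
  have hγ_cont : Tendsto γ (𝓝 0) (𝓝 p) := by
    simpa [hγ, parabola_zero] using (hasDerivAt_parabola p b 0 0).continuousAt.tendsto
  have hsuper : ∀ᶠ t in 𝓝[≠] (0 : ℝ), γ t ∈ {x ∈ Ω | v p < v x} := by
    have hlt := eventually_lt_of_deriv_deriv_pos
      ((eventually_hasDerivAt_comp_parabola hv b 0).mono fun t ht ↦ ht.differentiableAt)
      (by rw [deriv_comp_parabola_zero hv, hb])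
      (by simpa [deriv_deriv_comp_parabola_zero hv] using hbb)
    filter_upwards [hlt, (hγ_cont.eventually hΩ).filter_mono nhdsWithin_le_nhds] with t ht htΩ
    exact ⟨htΩ, by simpa [parabola_zero] using ht⟩
  have hneg : Tendsto (fun t : ℝ ↦ -t) (𝓝[≠] 0) (𝓝[≠] 0) := by
    simpa using (hasDerivAt_neg (0 : ℝ)).tendsto_nhdsNE (by simp)
  obtain ⟨t, ht, ht'⟩ := (hsuper.and (hneg.eventually hsuper)).exists
  have hmid : midpoint ℝ (γ t) (γ (-t)) = p := by
    simp only [hγ, parabola, midpoint_eq_smul_add, invOf_eq_inv, smul_zero, add_zero]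
    module
  exact lt_irrefl (v p) (hmid ▸ hconv.midpoint_mem ht ht').2

end TangentiallyConcave

/-! ### Connectedness of superlevel sets -/

section Superlevel

variable {X : Type*} [TopologicalSpace X] {Ω : Set X} {v : X → ℝ} {c : ℝ}

lemma isOpen_superlevel (hΩ : IsOpen Ω) (hv : ContinuousOn v Ω) : IsOpen {x ∈ Ω | c < v x} :=
  hv.isOpen_inter_preimage hΩ isOpen_Ioi

lemma mem_of_mem_closure_of_notMem_frontier {x : X} (hx : x ∈ closure Ω) (hx' : x ∉ frontier Ω) :
    x ∈ Ω :=
  interior_subset (closure_sdiff_frontier Ω ▸ ⟨hx, hx'⟩)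

lemma closure_superlevel_subset (hv : ContinuousOn v (closure Ω))
    (hbd : ∀ x ∈ frontier Ω, v x < c) : closure {x ∈ Ω | c < v x} ⊆ {x ∈ Ω | c ≤ v x} := by
  intro x hx
  have hclosed : IsClosed {x ∈ closure Ω | c ≤ v x} :=
    hv.preimage_isClosed_of_isClosed isClosed_closure isClosed_Ici
  have hsub : {x ∈ Ω | c < v x} ⊆ {x ∈ closure Ω | c ≤ v x} :=
    fun y hy ↦ ⟨subset_closure hy.1, hy.2.le⟩
  obtain ⟨hxΩ, hcx⟩ := closure_minimal hsub hclosed hx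
  exact ⟨mem_of_mem_closure_of_notMem_frontier hxΩ fun h ↦ (hbd x h).not_ge hcx, hcx⟩

lemma mem_connectedComponentIn_of_mem_closure {U : Set X} {x y : X} (hyU : y ∈ U)
    (hy : y ∈ closure (connectedComponentIn U x)) : y ∈ connectedComponentIn U x := by
  have hxU : x ∈ U := connectedComponentIn_nonempty_iff.1 (closure_nonempty_iff.1 ⟨y, hy⟩)
  have hpre : IsPreconnected (insert y (connectedComponentIn U x)) :=
    isPreconnected_connectedComponentIn.subset_closure (subset_insert _ _)
      (insert_subset hy subset_closure)
  exact hpre.subset_connectedComponentIn (mem_insert_of_mem y (mem_connectedComponentIn hxU))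
    (insert_subset hyU (connectedComponentIn_subset U x)) (mem_insert y _)

lemma exists_isLocalMax_mem_connectedComponentIn [LocallyConnectedSpace X] (hΩ : IsOpen Ω)
    (hΩc : IsCompact (closure Ω)) (hv : ContinuousOn v (closure Ω))
    (hbd : ∀ x ∈ frontier Ω, v x ≤ c) {x : X} (hx : x ∈ {x ∈ Ω | c < v x}) :
    ∃ m ∈ connectedComponentIn {x ∈ Ω | c < v x} x, IsLocalMax v m := by
  set U := {x ∈ Ω | c < v x}
  set C := connectedComponentIn U x
  have hCΩ : closure C ⊆ closure Ω :=
    closure_mono ((connectedComponentIn_subset U x).trans fun y hy ↦ hy.1)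
  have hxC : x ∈ closure C := subset_closure (mem_connectedComponentIn hx)
  obtain ⟨m, hm, hmax⟩ :=
    (hΩc.of_isClosed_subset isClosed_closure hCΩ).exists_isMaxOn ⟨x, hxC⟩ (hv.mono hCΩ)
  have hcm : c < v m := hx.2.trans_le (hmax hxC)
  have hmΩ : m ∈ Ω :=
    mem_of_mem_closure_of_notMem_frontier (hCΩ hm) fun h ↦ (hbd m h).not_gt hcm
  have hmC : m ∈ C := mem_connectedComponentIn_of_mem_closure ⟨hmΩ, hcm⟩ hm
  have hCo : IsOpen C := (isOpen_superlevel hΩ (hv.mono subset_closure)).connectedComponentIn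
  exact ⟨m, hmC, (hmax.on_subset subset_closure).isLocalMax (hCo.mem_nhds hmC)⟩

lemma isPreconnected_of_forall_connectedComponentIn_inter_nonempty {U S : Set X}
    (hS : (U ∩ S).Subsingleton) (h : ∀ x ∈ U, (connectedComponentIn U x ∩ S).Nonempty) :
    IsPreconnected U := by
  refine isPreconnected_of_forall_pair fun x hx y hy ↦ ?_
  obtain ⟨m, hmx, hmS⟩ := h x hx
  obtain ⟨n, hny, hnS⟩ := h y hy
  obtain rfl : m = n := hS ⟨connectedComponentIn_subset U x hmx, hmS⟩
    ⟨connectedComponentIn_subset U y hny, hnS⟩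
  have hxy : connectedComponentIn U x = connectedComponentIn U y :=
    (connectedComponentIn_eq hmx).trans (connectedComponentIn_eq hny).symm
  exact ⟨connectedComponentIn U x, connectedComponentIn_subset U x, mem_connectedComponentIn hx,
    hxy ▸ mem_connectedComponentIn hy, isPreconnected_connectedComponentIn⟩

end Superlevel

/-! ### Sweeping with hourglasses -/

section Hourglass

variable {E : Type*} [NormedAddCommGroup E] [NormedSpace ℝ E] {k : ℝ} {x y : E}

/-- The point of the hourglass around the segment `[x, y]` at parameter `t ∈ [0, 1]` in the
direction `w` of the closed unit ball. For fixed `w` it moves on a parabolic arc over the segment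
which, if `k > 0`, accelerates away from it. -/
def hourglassPoint (k : ℝ) (x y : E) (t : ℝ) (w : E) : E :=
  AffineMap.lineMap x y t + (k * (1 - t + t ^ 2)) • w

/-- The union of the closed balls of radius `k (1 - t + t²)` around the points `x + t (y - x)` of
the segment `[x, y]`, thinner in the middle than at its ends; a subset swept through an open set in
order to show that the latter contains segments. -/
def hourglass (k : ℝ) (x y : E) : Set E :=
  image2 (hourglassPoint k x y) (Icc 0 1) (closedBall 0 1)

lemma one_sub_add_sq_pos (t : ℝ) : 0 < 1 - t + t ^ 2 := by nlinarith [sq_nonneg (t - 1 / 2)]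

lemma hourglassPoint_mem_closedBall (hk : 0 ≤ k) (t : ℝ) {w : E} (hw : w ∈ closedBall 0 1) :
    hourglassPoint k x y t w ∈ closedBall (AffineMap.lineMap x y t) (k * (1 - t + t ^ 2)) := by
  have hr : 0 ≤ k * (1 - t + t ^ 2) := mul_nonneg hk (one_sub_add_sq_pos t).le
  rw [mem_closedBall_iff_norm, hourglassPoint, add_sub_cancel_left, norm_smul,
    Real.norm_of_nonneg hr]
  exact mul_le_of_le_one_right hr (mem_closedBall_zero_iff.1 hw)

lemma closedBall_subset_hourglass (hk : 0 < k) {t : ℝ} (ht : t ∈ Icc (0 : ℝ) 1) :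
    closedBall (AffineMap.lineMap x y t) (k * (1 - t + t ^ 2)) ⊆ hourglass k x y := by
  intro p hp
  have hr : 0 < k * (1 - t + t ^ 2) := mul_pos hk (one_sub_add_sq_pos t)
  refine ⟨t, ht, (k * (1 - t + t ^ 2))⁻¹ • (p - AffineMap.lineMap x y t), ?_, ?_⟩
  · rw [mem_closedBall_zero_iff, norm_smul, norm_inv, Real.norm_of_nonneg hr.le]
    exact inv_mul_le_one_of_le₀ (mem_closedBall_iff_norm.1 hp) hr.le
  · rw [hourglassPoint, smul_inv_smul₀ hr.ne', add_sub_cancel]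

lemma segment_subset_hourglass (k : ℝ) (x y : E) : segment ℝ x y ⊆ hourglass k x y := by
  rw [segment_eq_image_lineMap]
  rintro _ ⟨t, ht, rfl⟩
  exact ⟨t, ht, 0, by simp, by simp [hourglassPoint]⟩

lemma hourglass_self_subset_closedBall (hk : 0 ≤ k) (x : E) : hourglass k x x ⊆ closedBall x k := by
  rintro _ ⟨t, ht, w, hw, rfl⟩
  have hr : k * (1 - t + t ^ 2) ≤ k := mul_le_of_le_one_right hk (by nlinarith [ht.1, ht.2])
  have hmem := hourglassPoint_mem_closedBall (x := x) (y := x) hk t hw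
  rw [AffineMap.lineMap_same_apply] at hmem
  exact closedBall_subset_closedBall hr hmem

lemma continuous_hourglassPoint (k : ℝ) (x : E) :
    Continuous fun z : E × ℝ × E ↦ hourglassPoint k x z.1 z.2.1 z.2.2 := by
  simp only [hourglassPoint, AffineMap.lineMap_apply_module']
  fun_prop

lemma hourglass_subset_closure {U : Set E} (hy : y ∈ closure {z | hourglass k x z ⊆ U}) :
    hourglass k x y ⊆ closure U := by
  rintro _ ⟨t, ht, w, hw, rfl⟩
  have hcont : Continuous fun z ↦ hourglassPoint k x z t w :=
    (continuous_hourglassPoint k x).comp (by fun_prop : Continuous fun z ↦ (z, t, w))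
  have hmaps : MapsTo (fun z ↦ hourglassPoint k x z t w) {z | hourglass k x z ⊆ U} U :=
    fun z hz ↦ hz ⟨t, ht, w, hw, rfl⟩
  exact hmaps.closure hcont hy

lemma isOpen_setOf_hourglass_subset [ProperSpace E] {U : Set E} (hU : IsOpen U) (k : ℝ) (x : E) :
    IsOpen {y | hourglass k x y ⊆ U} := by
  refine isOpen_iff_mem_nhds.2 fun y hy ↦ ?_
  have hK : IsCompact (Icc (0 : ℝ) 1 ×ˢ closedBall (0 : E) 1) :=
    isCompact_Icc.prod (isCompact_closedBall 0 1)
  have hev : ∀ᶠ z in 𝓝 y, ∀ s ∈ Icc (0 : ℝ) 1 ×ˢ closedBall (0 : E) 1,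
      hourglassPoint k x z s.1 s.2 ∈ U :=
    hK.eventually_forall_of_forall_eventually fun s hs ↦
      (continuous_hourglassPoint k x).continuousAt.eventually
        (hU.mem_nhds (hy ⟨s.1, hs.1, s.2, hs.2, rfl⟩))
  filter_upwards [hev] with z hz
  rintro _ ⟨t, ht, w, hw, rfl⟩
  exact hz (t, w) ⟨ht, hw⟩

/-- The ends of the hourglasses, where `t = 0` or `t = 1`, are so small that they never leave `U`
while the second vertex of the segment runs along the path `P`. -/
lemma segment_subset_of_hourglass_subset [ProperSpace E] {U P : Set E} (hU : IsOpen U)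
    (hP : IsCompact P) (hPc : IsPreconnected P) (hPU : P ⊆ U)
    (h : ∀ k > 0, ∀ x y : E, hourglass k x y ⊆ closure U →
      ∀ t ∈ Ioo (0 : ℝ) 1, ∀ w ∈ closedBall (0 : E) 1, hourglassPoint k x y t w ∈ U)
    (hx : x ∈ P) (hy : y ∈ P) : segment ℝ x y ⊆ U := by
  obtain ⟨k, hk, hkU⟩ := hP.exists_cthickening_subset_open hU hPU
  have hball {z : E} (hz : z ∈ P) : closedBall z k ⊆ U :=
    (closedBall_subset_cthickening hz k).trans hkU
  have hclosed : closure {z | hourglass k x z ⊆ U} ∩ P ⊆ {z | hourglass k x z ⊆ U} := by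
    rintro z ⟨hz, hzP⟩ _ ⟨t, ht, w, hw, rfl⟩
    have hmem := hourglassPoint_mem_closedBall (x := x) (y := z) hk.le t hw
    rcases eq_endpoints_or_mem_Ioo_of_mem_Icc ht with rfl | rfl | ht
    · exact hball hx (by simpa using hmem)
    · exact hball hzP (by simpa using hmem)
    · exact h k hk x z (hourglass_subset_closure hz) t ht w hw
  have hsweep : P ⊆ {z | hourglass k x z ⊆ U} :=
    hPc.subset_of_closure_inter_subset (isOpen_setOf_hourglass_subset hU k x)
      ⟨x, hx, (hourglass_self_subset_closedBall hk.le x).trans (hball hx)⟩ hclosed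
  exact (segment_subset_hourglass k x y).trans (hsweep hy)

lemma convex_of_hourglass_subset [ProperSpace E] {U : Set E} (hU : IsOpen U)
    (hUc : IsPreconnected U)
    (h : ∀ k > 0, ∀ x y : E, hourglass k x y ⊆ closure U →
      ∀ t ∈ Ioo (0 : ℝ) 1, ∀ w ∈ closedBall (0 : E) 1, hourglassPoint k x y t w ∈ U) :
    Convex ℝ U := by
  refine convex_iff_segment_subset.2 fun x hx y hy ↦ ?_
  obtain ⟨σ, hσ⟩ := (hU.isConnected_iff_isPathConnected.1 ⟨⟨x, hx⟩, hUc⟩).joinedIn x hx y hy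
  exact segment_subset_of_hourglass_subset hU (isCompact_range σ.continuous)
    (isPreconnected_range σ.continuous) (range_subset_iff.2 hσ) h ⟨0, σ.source⟩ ⟨1, σ.target⟩

variable {v : E → ℝ}

lemma fderiv_sub_center_neg_of_isMinOn_closedBall {a p : E} {r : ℝ} (hr : 0 < r)
    (hp : p ∈ closedBall a r) (hv : DifferentiableAt ℝ v p) (hmin : IsMinOn v (closedBall a r) p)
    (hD : fderiv ℝ v p ≠ 0) : fderiv ℝ v p (p - a) < 0 := by
  have hnonneg : ∀ z ∈ closedBall a r, 0 ≤ fderiv ℝ v p (z - p) := fun z hz ↦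
    hmin.localize.hasFDerivWithinAt_nonneg hv.hasFDerivAt.hasFDerivWithinAt
      (sub_mem_posTangentConeAt_of_segment_subset ((convex_closedBall a r).segment_subset hp hz))
  obtain ⟨u, hu⟩ : ∃ u, fderiv ℝ v p u < 0 := by
    obtain ⟨u, hu⟩ := DFunLike.ne_iff.1 hD
    rcases lt_or_gt_of_ne hu with hu | hu
    · exact ⟨u, hu⟩
    · exact ⟨-u, by simpa using hu⟩
  have hu0 : 0 < ‖u‖ := norm_pos_iff.2 fun h ↦ by simp [h] at hu
  have hz : a + (r / ‖u‖) • u ∈ closedBall a r := by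
    simp [norm_smul, hu0.ne', abs_of_pos hr]
  calc fderiv ℝ v p (p - a)
      = (r / ‖u‖) * fderiv ℝ v p u - fderiv ℝ v p (a + (r / ‖u‖) • u - p) := by
        simp only [map_sub, map_add, map_smul, smul_eq_mul]; ring
    _ ≤ (r / ‖u‖) * fderiv ℝ v p u := sub_le_self _ (hnonneg _ hz)
    _ < 0 := mul_neg_of_pos_of_neg (by positivity) hu

lemma hourglassPoint_add (k : ℝ) (x y w : E) (t τ : ℝ) :
    hourglassPoint k x y (t + τ) w =
      parabola (hourglassPoint k x y t w) (y - x + (k * (2 * t - 1)) • w) (k • w) τ := by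
  simp only [hourglassPoint, parabola, AffineMap.lineMap_apply_module']
  module

/-- Minimality across the balls makes `v` decrease in the direction `w`, in which the arc through
the point accelerates; minimality along the arc then makes the tangential second derivative
positive. -/
lemma not_isMinOn_hourglass (hk : 0 < k) {t : ℝ} (ht : t ∈ Ioo (0 : ℝ) 1) {w : E}
    (hw : w ∈ closedBall 0 1) (hv : ContDiffAt ℝ 2 v (hourglassPoint k x y t w))
    (hD : fderiv ℝ v (hourglassPoint k x y t w) ≠ 0)
    (hconc : TangentiallyConcaveAt v (hourglassPoint k x y t w)) :
    ¬ IsMinOn v (hourglass k x y) (hourglassPoint k x y t w) := by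
  intro hmin
  set p := hourglassPoint k x y t w with hp
  set b := y - x + (k * (2 * t - 1)) • w
  have hr : 0 < k * (1 - t + t ^ 2) := mul_pos hk (one_sub_add_sq_pos t)
  have hDw : fderiv ℝ v p w < 0 := by
    have hneg := fderiv_sub_center_neg_of_isMinOn_closedBall hr
      (hourglassPoint_mem_closedBall hk.le t hw) (hv.differentiableAt (by simp))
      (hmin.on_subset (closedBall_subset_hourglass hk (Ioo_subset_Icc_self ht))) hD
    rw [← hp, hp, hourglassPoint, add_sub_cancel_left, ← hourglassPoint, ← hp, map_smul,
      smul_eq_mul] at hneg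
    exact neg_of_mul_neg_right hneg hr.le
  have harc : IsLocalMin (v ∘ parabola p b (k • w)) 0 := by
    have hev : ∀ᶠ τ in 𝓝 (0 : ℝ), t + τ ∈ Ioo (0 : ℝ) 1 :=
      (continuous_const_add t).continuousAt.eventually_mem (isOpen_Ioo.mem_nhds (by simpa using ht))
    filter_upwards [hev] with τ hτ
    have hle : v p ≤ v (hourglassPoint k x y (t + τ) w) :=
      hmin ⟨t + τ, Ioo_subset_Icc_self hτ, w, hw, rfl⟩
    simpa [parabola_zero, hourglassPoint_add] using hle
  have hDb : fderiv ℝ v p b = 0 := by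
    rw [← deriv_comp_parabola_zero hv b (k • w), harc.deriv_eq_zero]
  have hD2 : 0 ≤ fderiv ℝ (fderiv ℝ v) p b b + 2 * fderiv ℝ v p (k • w) := by
    rw [← deriv_deriv_comp_parabola_zero hv]
    exact deriv_deriv_nonneg_of_isLocalMin harc
      (eventually_hasDerivAt_comp_parabola hv b (k • w)).self_of_nhds.continuousAt
  rw [map_smul, smul_eq_mul] at hD2
  linarith [hconc b hDb, mul_neg_of_pos_of_neg hk hDw]

end Hourglass

/-! ### Convexity of superlevel sets -/

section Convexity

variable {E : Type*} [NormedAddCommGroup E] [NormedSpace ℝ E] [FiniteDimensional ℝ E]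
  {Ω : Set E} {v : E → ℝ} {c : ℝ}

lemma exists_fderiv_eq_zero_mem_connectedComponentIn (hΩ : IsOpen Ω)
    (hΩb : Bornology.IsBounded Ω) (hvc : ContinuousOn v (closure Ω))
    (hbd : ∀ x ∈ frontier Ω, v x ≤ c) {x : E} (hx : x ∈ {x ∈ Ω | c < v x}) :
    ∃ m ∈ connectedComponentIn {x ∈ Ω | c < v x} x, fderiv ℝ v m = 0 :=
  have := FiniteDimensional.proper_real E
  (exists_isLocalMax_mem_connectedComponentIn hΩ hΩb.isCompact_closure hvc hbd hx).imp
    fun _ hm ↦ ⟨hm.1, hm.2.fderiv_eq_zero⟩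

lemma convex_superlevel_of_frontier_lt (hΩ : IsOpen Ω) (hΩb : Bornology.IsBounded Ω)
    (hv : ContDiffOn ℝ 2 v Ω) (hvc : ContinuousOn v (closure Ω)) (hbd : ∀ x ∈ frontier Ω, v x < c)
    (hcrit : {x ∈ Ω | fderiv ℝ v x = 0}.Subsingleton)
    (hconc : ∀ x ∈ Ω, fderiv ℝ v x ≠ 0 → TangentiallyConcaveAt v x) :
    Convex ℝ {x ∈ Ω | c < v x} := by
  set U := {x ∈ Ω | c < v x}
  have hcritU : ∀ x ∈ U, (connectedComponentIn U x ∩ {x | fderiv ℝ v x = 0}).Nonempty :=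
    fun x hx ↦ exists_fderiv_eq_zero_mem_connectedComponentIn hΩ hΩb hvc
      (fun z hz ↦ (hbd z hz).le) hx
  have hUc : IsPreconnected U := isPreconnected_of_forall_connectedComponentIn_inter_nonempty
    (hcrit.anti fun x hx ↦ ⟨hx.1.1, hx.2⟩) hcritU
  refine convex_of_hourglass_subset (isOpen_superlevel hΩ hv.continuousOn) hUc
    fun k hk x y hcl t ht w hw ↦ ?_
  have hge : hourglass k x y ⊆ {x ∈ Ω | c ≤ v x} := hcl.trans (closure_superlevel_subset hvc hbd)
  have hmem : hourglassPoint k x y t w ∈ hourglass k x y := ⟨t, Ioo_subset_Icc_self ht, w, hw, rfl⟩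
  obtain ⟨hpΩ, hcp⟩ := hge hmem
  by_cases hD : fderiv ℝ v (hourglassPoint k x y t w) = 0
  · obtain ⟨z, hz⟩ : U.Nonempty := closure_nonempty_iff.1 ⟨_, hcl hmem⟩
    obtain ⟨m, hm, hm0⟩ := hcritU z hz
    have hmU : m ∈ U := connectedComponentIn_subset U z hm
    exact hcrit ⟨hpΩ, hD⟩ ⟨hmU.1, hm0⟩ ▸ hmU
  · refine ⟨hpΩ, hcp.lt_of_ne fun hcv ↦ ?_⟩
    exact not_isMinOn_hourglass hk ht hw (hv.contDiffAt (hΩ.mem_nhds hpΩ)) hD (hconc _ hpΩ hD)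
      fun q hq ↦ hcv ▸ (hge hq).2

lemma convex_superlevel_of_frontier_le (hΩ : IsOpen Ω) (hΩb : Bornology.IsBounded Ω)
    (hv : ContDiffOn ℝ 2 v Ω) (hvc : ContinuousOn v (closure Ω)) (hbd : ∀ x ∈ frontier Ω, v x ≤ c)
    (hcrit : {x ∈ Ω | fderiv ℝ v x = 0}.Subsingleton)
    (hconc : ∀ x ∈ Ω, fderiv ℝ v x ≠ 0 → TangentiallyConcaveAt v x) :
    Convex ℝ {x ∈ Ω | c < v x} := by
  refine convex_iff_segment_subset.2 fun x hx y hy ↦ ?_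
  obtain ⟨c', hcc', hc'⟩ := exists_between (lt_min hx.2 hy.2)
  have hconv : Convex ℝ {x ∈ Ω | c' < v x} := convex_superlevel_of_frontier_lt hΩ hΩb hv hvc
    (fun z hz ↦ (hbd z hz).trans_lt hcc') hcrit hconc
  have hseg := hconv.segment_subset ⟨hx.1, hc'.trans_le (min_le_left _ _)⟩
    ⟨hy.1, hc'.trans_le (min_le_right _ _)⟩
  exact fun z hz ↦ ⟨(hseg hz).1, hcc'.trans (hseg hz).2⟩

theorem level_sets_convex_iff_Lcurv_nonpos_general (hΩ : IsOpen Ω) (hΩb : Bornology.IsBounded Ω)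
    (hv : ContDiffOn ℝ 2 v Ω) (hvc : ContinuousOn v (closure Ω)) (hpos : ∀ x ∈ Ω, 0 ≤ v x)
    (hbd : ∀ x ∈ frontier Ω, v x = 0) (hcrit : {x ∈ Ω | fderiv ℝ v x = 0}.Subsingleton) :
    (∀ c : ℝ, 0 ≤ c → c < sSup (v '' Ω) → Convex ℝ {x ∈ Ω | c < v x}) ↔
      ∀ x ∈ Ω, fderiv ℝ v x ≠ 0 → TangentiallyConcaveAt v x := by
  refine ⟨fun h p hp _ ↦ ?_, fun h c hc _ ↦ convex_superlevel_of_frontier_le hΩ hΩb hv hvc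
    (fun x hx ↦ (hbd x hx).trans_le hc) hcrit h⟩
  have := FiniteDimensional.proper_real E
  have hbdd : BddAbove (v '' Ω) :=
    (hΩb.isCompact_closure.bddAbove_image hvc).mono (image_mono subset_closure)
  refine tangentiallyConcaveAt_of_convex_superlevel (hΩ.mem_nhds hp)
    (hv.contDiffAt (hΩ.mem_nhds hp)) ?_
  rcases (le_csSup hbdd (mem_image_of_mem v hp)).lt_or_eq with hlt | heq
  · exact h (v p) (hpos p hp) hlt
  · have hempty : {x ∈ Ω | v p < v x} = ∅ := eq_empty_of_forall_notMem fun x hx ↦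
      hx.2.not_ge (heq ▸ le_csSup hbdd (mem_image_of_mem v hx.1))
    exact hempty ▸ convex_empty

end Convexity

/-! ### The operator `L_v` -/

section Plane

/-- The vector `(ℓ_y, -ℓ_x)` spanning the kernel of a nonzero linear functional
`ℓ = (ℓ_x, ℓ_y)` on the plane. -/
def kerVec (ℓ : E2 →L[ℝ] ℝ) : E2 := ℓ (e2 1) • e2 0 - ℓ (e2 0) • e2 1

lemma apply_kerVec (ℓ : E2 →L[ℝ] ℝ) : ℓ (kerVec ℓ) = 0 := by
  simp [kerVec, mul_comm]

lemma kerVec_zero (ℓ : E2 →L[ℝ] ℝ) : kerVec ℓ 0 = ℓ (e2 1) := by simp [kerVec, e2]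

lemma kerVec_one (ℓ : E2 →L[ℝ] ℝ) : kerVec ℓ 1 = -ℓ (e2 0) := by simp [kerVec, e2]

lemma eq_smul_e2_add_smul_e2 (b : E2) : b = b 0 • e2 0 + b 1 • e2 1 := by
  ext i; fin_cases i <;> simp [e2]

lemma apply_eq_of_e2 (ℓ : E2 →L[ℝ] ℝ) (b : E2) : ℓ b = b 0 * ℓ (e2 0) + b 1 * ℓ (e2 1) := by
  conv_lhs => rw [eq_smul_e2_add_smul_e2 b]
  simp

lemma exists_eq_smul_kerVec {ℓ : E2 →L[ℝ] ℝ} (hℓ : ℓ ≠ 0) {b : E2} (hb : ℓ b = 0) :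
    ∃ s : ℝ, b = s • kerVec ℓ := by
  rw [apply_eq_of_e2] at hb
  by_cases h₀ : ℓ (e2 0) = 0
  · have h₁ : ℓ (e2 1) ≠ 0 := fun h₁ ↦ hℓ (by ext z; simp [apply_eq_of_e2 ℓ z, h₀, h₁])
    have hb₁ : b 1 = 0 := by simpa [h₀, h₁] using hb
    refine ⟨b 0 / ℓ (e2 1), ?_⟩
    ext i
    fin_cases i
    · simp [kerVec_zero, h₁]
    · simp [kerVec_one, h₀, hb₁]
  · refine ⟨-b 1 / ℓ (e2 0), ?_⟩
    have hb₀ : b 0 = -b 1 / ℓ (e2 0) * ℓ (e2 1) := by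
      field_simp
      linarith
    ext i
    fin_cases i
    · simpa [kerVec_zero] using hb₀
    · simp [kerVec_one, h₀]

variable {v : E2 → ℝ} {p : E2}

lemma hess2_eq (hv : ContDiffAt ℝ 2 v p) (a b : E2) :
    hess2 v p a b = fderiv ℝ (fderiv ℝ v) p a b := by
  simp [hess2, fderiv_clm_apply (differentiableAt_fderiv hv) (differentiableAt_const b)]

lemma Lcurv_eq (hv : ContDiffAt ℝ 2 v p) :
    Lcurv v p = fderiv ℝ (fderiv ℝ v) p (kerVec (fderiv ℝ v p)) (kerVec (fderiv ℝ v p)) := by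
  have hsymm : fderiv ℝ (fderiv ℝ v) p (e2 1) (e2 0) = fderiv ℝ (fderiv ℝ v) p (e2 0) (e2 1) :=
    hv.isSymmSndFDerivAt (by simp) _ _
  simp only [Lcurv, hess2_eq hv, kerVec, map_sub, map_smul, sub_apply, smul_apply, smul_eq_mul,
    hsymm]
  ring

lemma Lcurv_nonpos_iff (hv : ContDiffAt ℝ 2 v p) :
    Lcurv v p ≤ 0 ↔ (fderiv ℝ v p ≠ 0 → TangentiallyConcaveAt v p) := by
  rw [Lcurv_eq hv]
  constructor
  · intro hL hD b hb
    obtain ⟨s, rfl⟩ := exists_eq_smul_kerVec hD hb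
    simp only [map_smul, smul_apply, smul_eq_mul, ← mul_assoc]
    exact mul_nonpos_of_nonneg_of_nonpos (mul_self_nonneg s) hL
  · intro h
    by_cases hD : fderiv ℝ v p = 0
    · simp [hD, kerVec]
    · exact h hD _ (apply_kerVec _)

end Plane

/-- **Theorem C.1.**  Let `v ∈ C²(closure Ω)` be positive on the bounded `C²`
planar domain `Ω` with `v = 0` on `∂Ω`, and suppose `v` has a unique critical point in `Ω`.
Then every superlevel set `{x ∈ Ω : v(x) > c}`, `0 ≤ c < max v`, is convex if and only if
`L_v ≤ 0` at every point of `Ω`. -/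
theorem level_sets_convex_iff_Lcurv_nonpos (Ω : Set E2) (hΩ : C2Domain Ω)
    (v : E2 → ℝ) (hv : ContDiffOn ℝ 2 v (closure Ω))
    (hpos : ∀ x ∈ Ω, 0 < v x) (hbd : ∀ x ∈ frontier Ω, v x = 0)
    (hcrit : ∃! x : E2, x ∈ Ω ∧ fderiv ℝ v x = 0) :
    (∀ c : ℝ, 0 ≤ c → c < sSup (v '' Ω) → Convex ℝ {x ∈ Ω | c < v x}) ↔
      ∀ x ∈ Ω, Lcurv v x ≤ 0 := by
  have hv' : ContDiffOn ℝ 2 v Ω := hv.mono subset_closure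
  rw [level_sets_convex_iff_Lcurv_nonpos_general hΩ.1 hΩ.2.1 hv' hv.continuousOn
    (fun x hx ↦ (hpos x hx).le) hbd fun x hx y hy ↦ hcrit.unique hx hy]
  exact forall₂_congr fun x hx ↦ (Lcurv_nonpos_iff (hv'.contDiffAt (hΩ.1.mem_nhds hx))).symm
end
end
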